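/- Let V be a Banach space with a normalized unconditional basis (v_i) having the property that there is a constant C > 0 so that for any two interlacing sequences p_1 < q_1 < p_2 < q_2 < ⋯ in ℕ, (v_{p_n}) C-dominates (v_{q_n}). Let X be a Banach space with an FDD (E_i) which satisfies subsequential V-lower estimates. Then X embeds isomorphically into an ℒ∞ space Z with an FDD (F̄_i) which satisfies skipped subsequential V'-lower estimates, where V' is spanned by some subsequence (v_{m_i}) of (v_i); that is, there exist K ≥ 1 and a strictly increasing sequence (m_i) such that whenever p_1 < q_1 < p_2 < q_2 < ⋯ in ℕ and (z_n) is a normalized block sequence of (F̄_i) with supp(z_n) ⊆ (m_{p_n}, m_{q_n}) for all n, then (z_n) K-dominates (v_{q_n}). Furthermore, if (E_i) and (v_i) are both shrinking, then (F̄_i) can be chosen to be shrinking too. -/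

import Mathlib

open Filter Topology

/-- `X` embeds isomorphically into `Y`. -/
def Embeds (X Y : Type*) [NormedAddCommGroup X] [NormedSpace ℝ X]
    [NormedAddCommGroup Y] [NormedSpace ℝ Y] : Prop :=
  ∃ T : X →L[ℝ] Y, ∃ c : ℝ, 0 < c ∧ ∀ x : X, c * ‖x‖ ≤ ‖T x‖

/-- `X` is an `ℒ_{∞,λ}` space. -/
def IsLinftyLambda (lam : ℝ) (X : Type*) [NormedAddCommGroup X] [NormedSpace ℝ X] : Prop :=
  ∃ E : ℕ → Submodule ℝ X, Monotone E ∧ (∀ n, FiniteDimensional ℝ (E n)) ∧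
    Dense (⋃ n, (E n : Set X)) ∧
    ∀ n, ∃ T : (E n) ≃L[ℝ] (Fin (Module.finrank ℝ (E n)) → ℝ),
      ‖(T : E n →L[ℝ] (Fin (Module.finrank ℝ (E n)) → ℝ))‖ *
        ‖(T.symm : (Fin (Module.finrank ℝ (E n)) → ℝ) →L[ℝ] E n)‖ ≤ lam

/-- `X` is an `ℒ_∞` space. -/
def IsLinfty (X : Type*) [NormedAddCommGroup X] [NormedSpace ℝ X] : Prop :=
  ∃ lam : ℝ, IsLinftyLambda lam X

/-- A finite dimensional decomposition (FDD) of a Banach space, given by its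
sequence of coordinate projections. -/
structure FDDOn (X : Type*) [NormedAddCommGroup X] [NormedSpace ℝ X] where
  P : ℕ → X →L[ℝ] X
  finDim : ∀ n, FiniteDimensional ℝ (LinearMap.range (P n : X →ₗ[ℝ] X))
  idem : ∀ n x, P n (P n x) = P n x
  orth : ∀ m n, m ≠ n → ∀ x, P m (P n x) = 0
  total : ∀ x : X, Tendsto (fun N => ∑ i ∈ Finset.range N, P i x) atTop (𝓝 x)

namespace FDDOn

variable {X : Type*} [NormedAddCommGroup X] [NormedSpace ℝ X]

/-- Support of a vector with respect to the FDD. -/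
def suppIn (F : FDDOn X) (x : X) : Set ℕ := {n | F.P n x ≠ 0}

/-- `x` is finitely supported with respect to the FDD, with support contained in
`[a, b]` and both endpoints active. -/
def SuppExact (F : FDDOn X) (x : X) (a b : ℕ) : Prop :=
  a ≤ b ∧ (F.suppIn x ⊆ Set.Icc a b) ∧ a ∈ F.suppIn x ∧ b ∈ F.suppIn x

/-- `z` is a block sequence of the FDD. -/
def IsBlockSeq (F : FDDOn X) (z : ℕ → X) (a b : ℕ → ℕ) : Prop :=
  (∀ n, F.SuppExact (z n) (a n) (b n)) ∧ ∀ n, b n < a (n + 1)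

/-- The FDD is shrinking: every normalized block sequence is weakly null. -/
def Shrinking (F : FDDOn X) : Prop :=
  ∀ (z : ℕ → X) (a b : ℕ → ℕ), F.IsBlockSeq z a b → (∀ n, ‖z n‖ = 1) →
    ∀ f : X →L[ℝ] ℝ, Tendsto (fun n => f (z n)) atTop (𝓝 0)

end FDDOn

/-- `v : ℕ → V` is a Schauder basis of `V`. -/
def IsSchauderBasis {V : Type*} [NormedAddCommGroup V] [NormedSpace ℝ V] (v : ℕ → V) : Prop :=
  ∀ x : V, ∃! a : ℕ → ℝ,
    Tendsto (fun N => ∑ i ∈ Finset.range N, a i • v i) atTop (𝓝 x)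

/-- `v` is an unconditional basis. -/
def UnconditionalBasis {V : Type*} [NormedAddCommGroup V] [NormedSpace ℝ V] (v : ℕ → V) : Prop :=
  IsSchauderBasis v ∧ ∃ Ku : ℝ, 1 ≤ Ku ∧
    ∀ (a ε : ℕ → ℝ) (N : ℕ), (∀ i, |ε i| ≤ 1) →
      ‖∑ i ∈ Finset.range N, (ε i * a i) • v i‖ ≤ Ku * ‖∑ i ∈ Finset.range N, a i • v i‖

/-- A block sequence of the basis `v`. -/
def BasisBlockSeq {V : Type*} [NormedAddCommGroup V] [NormedSpace ℝ V]
    (v : ℕ → V) (z : ℕ → V) (a b : ℕ → ℕ) : Prop :=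
  (∀ n, ∃ co : ℕ → ℝ, z n = ∑ i ∈ Finset.Icc (a n) (b n), co i • v i) ∧
  ∀ n, b n < a (n + 1)

/-- `v` is a shrinking basis: every bounded block sequence is weakly null. -/
def ShrinkingBasis {V : Type*} [NormedAddCommGroup V] [NormedSpace ℝ V] (v : ℕ → V) : Prop :=
  IsSchauderBasis v ∧
  ∀ (z : ℕ → V) (a b : ℕ → ℕ), BasisBlockSeq v z a b → (∀ n, ‖z n‖ ≤ 1) →
    ∀ f : V →L[ℝ] ℝ, Tendsto (fun n => f (z n)) atTop (𝓝 0)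

/-- The FDD `F` satisfies subsequential `C`-`V`-lower estimates: every normalized block
sequence `(z_n)` with minimal supports `(a_n)` `C`-dominates `(v_{a_n})`. -/
def SubseqLowerEst {Z V : Type*} [NormedAddCommGroup Z] [NormedSpace ℝ Z]
    [NormedAddCommGroup V] [NormedSpace ℝ V]
    (F : FDDOn Z) (v : ℕ → V) (C : ℝ) : Prop :=
  ∀ (z : ℕ → Z) (a b : ℕ → ℕ), F.IsBlockSeq z a b → (∀ n, ‖z n‖ = 1) →
    ∀ (co : ℕ → ℝ) (N : ℕ),
      ‖∑ n ∈ Finset.range N, co n • v (a n)‖ ≤ C * ‖∑ n ∈ Finset.range N, co n • z n‖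

/-- A form of Simons' inequality for a norming set of functionals attaining every norm. -/
theorem le_of_eventually_le_on_boundary {E : Type*} [NormedAddCommGroup E] [NormedSpace ℝ E]
    [CompleteSpace E] (B : Set (E →L[ℝ] ℝ)) (hB_le : ∀ k ∈ B, ∀ x, k x ≤ ‖x‖)
    (hB : ∀ x, ∃ k ∈ B, k x = ‖x‖) (z : ℕ → E) (hz : ∀ j, ‖z j‖ ≤ 1)
    (b : E →L[ℝ] ℝ) (hb : ∀ x, b x ≤ ‖x‖) (τ s : ℝ) (hτ : ∀ j, τ ≤ b (z j))
    (hs : ∀ k ∈ B, ∀ᶠ j in atTop, k (z j) ≤ s) : τ ≤ s := by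
  refine le_of_forall_pos_le_add fun ε hε => ?_
  set C : ℕ → Set E := fun n => convexHull ℝ (z '' Set.Ici n) with hC
  have hCconv : ∀ n, Convex ℝ (C n) := fun n => convex_convexHull ℝ _
  have hCne : ∀ n, (C n).Nonempty := fun n =>
    ⟨z n, subset_convexHull ℝ _ ⟨n, Set.mem_Ici.2 le_rfl, rfl⟩⟩
  have hCnorm : ∀ n, ∀ g ∈ C n, ‖g‖ ≤ 1 := by
    intro n g hg
    have : C n ⊆ Metric.closedBall 0 1 := by
      refine convexHull_min ?_ (convex_closedBall 0 1)
      rintro _ ⟨j, -, rfl⟩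
      simpa using hz j
    simpa using this hg
  have hanti : ∀ n, C (n + 1) ⊆ C n := fun n =>
    convexHull_mono (Set.image_mono (Set.Ici_subset_Ici.2 (Nat.le_succ n)))
  have hnear : ∀ (n : ℕ) (x : E), ∃ g ∈ C n, ∀ g' ∈ C n,
      ‖x + (1 / 2 : ℝ) ^ n • g‖ ≤ ‖x + (1 / 2 : ℝ) ^ n • g'‖ + ε * (1 / 2) ^ (2 * n + 1) := by
    intro n x
    set S : Set ℝ := (fun g => ‖x + (1 / 2 : ℝ) ^ n • g‖) '' C n with hS
    have hSb : BddBelow S := ⟨0, by rintro _ ⟨g, -, rfl⟩; positivity⟩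
    have hlt : sInf S < sInf S + ε * (1 / 2) ^ (2 * n + 1) := by
      have : 0 < ε * (1 / 2 : ℝ) ^ (2 * n + 1) := by positivity
      linarith
    obtain ⟨_, ⟨g, hg, rfl⟩, hglt⟩ := exists_lt_of_csInf_lt ((hCne n).image _) hlt
    refine ⟨g, hg, fun g' hg' => ?_⟩
    have := csInf_le hSb ⟨g', hg', rfl⟩
    simp only at hglt this
    linarith
  choose G hGmem hGmin using hnear
  let h : ℕ → E := fun n => Nat.rec 0 (fun n x => x + (1 / 2 : ℝ) ^ (n + 1) • G n x) n
  set g : ℕ → E := fun n => G n (h n) with hg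
  have hgmem : ∀ n, g n ∈ C n := fun n => hGmem n _
  have h0 : h 0 = 0 := rfl
  have hsucc : ∀ n, h (n + 1) = h n + (1 / 2 : ℝ) ^ (n + 1) • g n := fun n => rfl
  have hpow : Tendsto (fun n : ℕ => (1 / 2 : ℝ) ^ n) atTop (𝓝 0) :=
    tendsto_pow_atTop_nhds_zero_of_lt_one (by norm_num) (by norm_num)
  obtain ⟨H, hH⟩ : ∃ H, Tendsto h atTop (𝓝 H) := by
    refine cauchySeq_tendsto_of_complete
      (cauchySeq_of_le_geometric (1 / 2) (1 / 2) (by norm_num) fun n => ?_)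
    rw [dist_comm, dist_eq_norm, hsucc, add_sub_cancel_left, norm_smul, Real.norm_of_nonneg (by positivity)]
    have := hCnorm n _ (hgmem n)
    have hp : (0 : ℝ) < (1 / 2) ^ n := by positivity
    rw [pow_succ]
    nlinarith
  have he : Tendsto (fun N => h N + (1 / 2 : ℝ) ^ N • g N) atTop (𝓝 H) := by
    have : Tendsto (fun N => (1 / 2 : ℝ) ^ N • g N) atTop (𝓝 0) := by
      refine squeeze_zero_norm (fun n => ?_) hpow
      rw [norm_smul, Real.norm_of_nonneg (by positivity)]
      exact mul_le_of_le_one_right (by positivity) (hCnorm n _ (hgmem n))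
    simpa using hH.add this
  have hrep : ∀ n N, n ≤ N → ∀ g' ∈ C N, ∃ G' ∈ C n,
      h N + (1 / 2 : ℝ) ^ N • g' = h n + (1 / 2 : ℝ) ^ n • G' := by
    intro n N hnN
    induction N, hnN using Nat.le_induction with
    | base => exact fun g' hg' => ⟨g', hg', rfl⟩
    | succ N hnN ih =>
      intro g' hg'
      obtain ⟨G', hG', hEq⟩ := ih ((1 / 2 : ℝ) • g N + (1 / 2 : ℝ) • g')
        (hCconv N (hgmem N) (hanti N hg') (by norm_num) (by norm_num) (by norm_num))
      refine ⟨G', hG', ?_⟩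
      rw [← hEq, hsucc, smul_add, smul_smul, smul_smul, pow_succ, add_assoc]
  have hD : ∀ n, τ - ε * (1 - (1 / 2) ^ n) ≤ 2 ^ n * (‖H‖ - ‖h n‖) := by
    intro n
    induction n with
    | zero =>
      have : τ ≤ b H := by
        refine ge_of_tendsto ((b.continuous.tendsto H).comp he) (Eventually.of_forall fun N => ?_)
        obtain ⟨G', hG', hEq⟩ := hrep 0 N (Nat.zero_le _) _ (hgmem N)
        have hsub : C 0 ⊆ {x | τ ≤ b x} := by
          refine convexHull_min ?_ (convex_halfSpace_ge b.toLinearMap.isLinear τ)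
          rintro _ ⟨j, -, rfl⟩
          exact hτ j
        have hmem : τ ≤ b G' := hsub hG'
        simp only [Function.comp, hEq, h0, pow_zero, one_smul, zero_add]
        exact hmem
      have := this.trans (hb H)
      simpa [h0] using this
    | succ n ih =>
      have h1 : ‖h n + (1 / 2 : ℝ) ^ n • g n‖ ≤ ‖H‖ + ε * (1 / 2) ^ (2 * n + 1) := by
        refine ge_of_tendsto (he.norm.add_const _) (eventually_atTop.2 ⟨n, fun N hN => ?_⟩)
        obtain ⟨G', hG', hEq⟩ := hrep n N hN _ (hgmem N)
        simp only [hEq]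
        exact hGmin n (h n) G' hG'
      have h2 : h (n + 1) = (1 / 2 : ℝ) • h n + (1 / 2 : ℝ) • (h n + (1 / 2 : ℝ) ^ n • g n) := by
        rw [hsucc, pow_succ', mul_smul]
        module
      have h3 : ‖h (n + 1)‖ ≤ 1 / 2 * ‖h n‖ + 1 / 2 * ‖h n + (1 / 2 : ℝ) ^ n • g n‖ := by
        rw [h2]
        refine (norm_add_le _ _).trans (le_of_eq ?_)
        rw [norm_smul, norm_smul]
        norm_num
      have h4 : (2 : ℝ) ^ n * (ε * (1 / 2) ^ (2 * n + 1)) = ε * (1 / 2) ^ (n + 1) := by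
        rw [show 2 * n + 1 = n + (n + 1) by ring, pow_add (1 / 2 : ℝ) n (n + 1)]
        have : (2 : ℝ) ^ n * (1 / 2) ^ n = 1 := by rw [← mul_pow]; norm_num
        linear_combination ε * (1 / 2) ^ (n + 1) * this
      have hp : (0 : ℝ) < 2 ^ n := by positivity
      have h5 : (2 : ℝ) ^ n * (‖H‖ - ‖h n‖) - 2 ^ n * (ε * (1 / 2) ^ (2 * n + 1)) ≤
          2 ^ (n + 1) * (‖H‖ - ‖h (n + 1)‖) := by
        have h6 : ‖H‖ - ‖h n‖ - ε * (1 / 2) ^ (2 * n + 1) ≤ 2 * (‖H‖ - ‖h (n + 1)‖) := by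
          linarith
        calc _ = (2 : ℝ) ^ n * (‖H‖ - ‖h n‖ - ε * (1 / 2) ^ (2 * n + 1)) := by ring
          _ ≤ 2 ^ n * (2 * (‖H‖ - ‖h (n + 1)‖)) := by gcongr
          _ = _ := by ring
      rw [h4] at h5
      have h6 : (1 / 2 : ℝ) ^ n = 2 * (1 / 2) ^ (n + 1) := by ring
      rw [h6] at ih
      linarith
  obtain ⟨k, hkB, hk⟩ := hB H
  obtain ⟨n, hn⟩ := eventually_atTop.1 (hs k hkB)
  have hkC : C n ⊆ {x | k x ≤ s} := by
    refine convexHull_min ?_ (convex_halfSpace_le k.toLinearMap.isLinear s)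
    rintro _ ⟨j, hj, rfl⟩
    exact hn j hj
  have hup : k H ≤ k (h n) + (1 / 2) ^ n * s := by
    refine le_of_tendsto ((k.continuous.tendsto H).comp he) (eventually_atTop.2 ⟨n, fun N hN => ?_⟩)
    obtain ⟨G', hG', hEq⟩ := hrep n N hN _ (hgmem N)
    have hmem : k G' ≤ s := hkC hG'
    simp only [Function.comp, hEq, map_add, map_smul, smul_eq_mul]
    gcongr
  have h6 := hD n
  have h7 := hB_le k hkB (h n)
  have h8 : (2 : ℝ) ^ n * (‖H‖ - ‖h n‖) ≤ s := by
    have hpp : (2 : ℝ) ^ n * (1 / 2) ^ n = 1 := by rw [← mul_pow]; norm_num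
    have hp : (0 : ℝ) < 2 ^ n := by positivity
    calc (2 : ℝ) ^ n * (‖H‖ - ‖h n‖) ≤ 2 ^ n * ((1 / 2) ^ n * s) := by
          gcongr; linarith
      _ = s := by rw [← mul_assoc, hpp, one_mul]
  have hp : (0 : ℝ) < (1 / 2) ^ n := by positivity
  nlinarith

/-- Partial sum projections of a finite dimensional decomposition. -/
noncomputable def FDDOn.S {X : Type*} [NormedAddCommGroup X] [NormedSpace ℝ X] (F : FDDOn X)
    (N : ℕ) : X →L[ℝ] X := ∑ i ∈ Finset.range N, F.P i

namespace FDDOn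

variable {X : Type*} [NormedAddCommGroup X] [NormedSpace ℝ X]

theorem S_apply (F : FDDOn X) (N : ℕ) (x : X) :
    F.S N x = ∑ i ∈ Finset.range N, F.P i x := by
  simp [S]

theorem tendsto_S (F : FDDOn X) (x : X) : Tendsto (fun N => F.S N x) atTop (𝓝 x) := by
  simpa only [S_apply] using F.total x

theorem P_S (F : FDDOn X) (i N : ℕ) (x : X) :
    F.P i (F.S N x) = if i < N then F.P i x else 0 := by
  rw [S_apply, map_sum]
  split_ifs with h
  · rw [Finset.sum_eq_single i]
    · exact F.idem i x
    · exact fun j _ hj => F.orth i j hj.symm x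
    · exact fun hi => absurd (Finset.mem_range.2 h) hi
  · refine Finset.sum_eq_zero fun j hj => F.orth i j ?_ x
    have := Finset.mem_range.1 hj
    omega

theorem S_S (F : FDDOn X) (i j : ℕ) (x : X) : F.S i (F.S j x) = F.S (min i j) x := by
  rw [S_apply]
  simp only [P_S]
  rw [← Finset.sum_filter, S_apply]
  refine Finset.sum_congr ?_ fun _ _ => rfl
  ext k
  simp

theorem S_zero (F : FDDOn X) (x : X) : F.S 0 x = 0 := by simp [S_apply]

theorem S_succ_sub (F : FDDOn X) (n : ℕ) (x : X) : F.S (n + 1) x - F.S n x = F.P n x := by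
  simp [S_apply, Finset.sum_range_succ]

/-- The decomposition with prescribed partial sum projections. -/
noncomputable def ofPartialSums (Q : ℕ → X →L[ℝ] X) (h0 : Q 0 = 0)
    (hQ : ∀ i j x, Q i (Q j x) = Q (min i j) x)
    (hfin : ∀ n, FiniteDimensional ℝ (LinearMap.range (Q n : X →ₗ[ℝ] X)))
    (hlim : ∀ x, Tendsto (fun N => Q N x) atTop (𝓝 x)) : FDDOn X where
  P n := Q (n + 1) - Q n
  finDim n := by
    have := hfin (n + 1)
    refine Submodule.finiteDimensional_of_le
      (S₂ := LinearMap.range (Q (n + 1) : X →ₗ[ℝ] X)) ?_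
    rintro _ ⟨x, rfl⟩
    refine ⟨x - Q n x, ?_⟩
    simp [hQ]
  idem n x := by simp [hQ]
  orth m n hmn x := by
    rcases lt_or_gt_of_ne hmn with h | h
    · simp only [sub_apply, map_sub, hQ]
      rw [min_eq_left (by omega), min_eq_left (by omega), min_eq_left (by omega),
        min_eq_left (by omega)]
      simp
    · simp only [sub_apply, map_sub, hQ]
      rw [min_eq_right (by omega), min_eq_right (by omega), min_eq_right (by omega),
        min_eq_right (by omega)]
      simp
  total x := by
    have : ∀ N, ∑ i ∈ Finset.range N, (Q (i + 1) - Q i) x = Q N x := by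
      intro N
      simp only [sub_apply]
      rw [Finset.sum_range_sub (fun i => Q i x) N]
      simp [h0]
    simpa only [this] using hlim x

theorem ofPartialSums_S (Q : ℕ → X →L[ℝ] X) (h0 : Q 0 = 0)
    (hQ : ∀ i j x, Q i (Q j x) = Q (min i j) x)
    (hfin : ∀ n, FiniteDimensional ℝ (LinearMap.range (Q n : X →ₗ[ℝ] X)))
    (hlim : ∀ x, Tendsto (fun N => Q N x) atTop (𝓝 x)) (N : ℕ) (x : X) :
    (ofPartialSums Q h0 hQ hfin hlim).S N x = Q N x := by
  rw [S_apply]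
  simp only [ofPartialSums, sub_apply]
  rw [Finset.sum_range_sub (fun i => Q i x) N]
  simp [h0]

theorem S_eq_zero_of_supp (F : FDDOn X) {x : X} {m : ℕ} (h : ∀ i ∈ F.suppIn x, m ≤ i) :
    F.S m x = 0 := by
  rw [S_apply]
  refine Finset.sum_eq_zero fun i hi => ?_
  by_contra hne
  have := h i hne
  have := Finset.mem_range.1 hi
  omega

theorem S_eq_self_of_supp (F : FDDOn X) {x : X} {m : ℕ} (h : ∀ i ∈ F.suppIn x, i < m) :
    F.S m x = x := by
  refine tendsto_nhds_unique (tendsto_const_nhds.congr' ?_) (F.tendsto_S x)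
  filter_upwards [eventually_ge_atTop m] with N hN
  rw [S_apply, S_apply]
  refine Finset.sum_subset (Finset.range_subset_range.2 hN) fun i _ hi => ?_
  by_contra hne
  exact hi (Finset.mem_range.2 (h i hne))

end FDDOn

/-- A uniformly bounded family of functionals converges pointwise along every ultrafilter. -/
theorem exists_ultrafilter_limit {E ι : Type*} [NormedAddCommGroup E] [NormedSpace ℝ E]
    (f : ι → E →L[ℝ] ℝ) (M : ℝ) (hf : ∀ i x, |f i x| ≤ M * ‖x‖) (U : Ultrafilter ι) :
    ∃ g : E →L[ℝ] ℝ, (∀ x, |g x| ≤ M * ‖x‖) ∧ ∀ x, Tendsto (fun i => f i x) U (𝓝 (g x)) := by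
  have hlim : ∀ x, ∃ c, |c| ≤ M * ‖x‖ ∧ Tendsto (fun i => f i x) U (𝓝 c) := by
    intro x
    obtain ⟨c, hc, hle⟩ := (isCompact_closedBall (0 : ℝ) (M * ‖x‖)).ultrafilter_le_nhds
      (U.map fun i => f i x) (by
        rw [Ultrafilter.coe_map, le_principal_iff, mem_map]
        exact univ_mem' fun i => by simpa using hf i x)
    exact ⟨c, by simpa using hc, hle⟩
  choose g hg hlim using hlim
  refine ⟨LinearMap.mkContinuous { toFun := g, map_add' := fun x y => ?_, map_smul' := fun c x => ?_ }
    M fun x => hg x, hg, hlim⟩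
  · refine tendsto_nhds_unique (hlim (x + y)) ?_
    simpa using (hlim x).add (hlim y)
  · refine tendsto_nhds_unique (hlim (c • x)) ?_
    simpa using (hlim x).const_mul c

/-- Data of a Bourgain–Delbaen construction: every index of positive rank has a predecessor and
two further indices of smaller rank, with cut points beyond the rank of the predecessor. -/
structure BDData (Γ : Type) where
  rank : Γ → ℕ
  root : Γ
  eq_root : ∀ γ, rank γ = 0 → γ = root
  rank_root : rank root = 0
  fin : ∀ n, {γ | rank γ ≤ n}.Finite
  pre : Γ → Γ
  mid : Γ → Γ
  last : Γ → Γ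
  k : Γ → ℕ
  l : Γ → ℕ
  a : Γ → ℝ
  β : ℝ
  β_nonneg : 0 ≤ β
  β_le : β ≤ 1 / 8
  a_le : ∀ γ, |a γ| ≤ 1
  rank_pre : ∀ γ, 0 < rank γ → rank (pre γ) < rank γ
  rank_mid : ∀ γ, 0 < rank γ → rank (mid γ) < rank γ
  rank_last : ∀ γ, 0 < rank γ → rank (last γ) < rank γ
  pre_le_k : ∀ γ, 0 < rank γ → rank (pre γ) ≤ k γ
  pre_le_l : ∀ γ, 0 < rank γ → rank (pre γ) ≤ l γ

namespace BDData

variable {Γ : Type} (D : BDData Γ)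

/-- The value at `γ` of the canonical extension of the restriction of `z` to rank at most `j`. -/
noncomputable def ext (z : Γ → ℝ) (γ : Γ) (j : ℕ) : ℝ :=
  if _h : D.rank γ ≤ j then z γ else
    ext z (D.pre γ) j + D.β * (ext z (D.mid γ) j - ext z (D.mid γ) (min (D.k γ) j)) +
      D.β * (D.a γ * (ext z (D.last γ) j - ext z (D.last γ) (min (D.l γ) j)))
termination_by D.rank γ
decreasing_by
  all_goals
    have h0 : 0 < D.rank γ := by omega
    first
    | exact D.rank_pre γ h0
    | exact D.rank_mid γ h0
    | exact D.rank_last γ h0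

theorem ext_of_le (z : Γ → ℝ) {γ : Γ} {j : ℕ} (h : D.rank γ ≤ j) : D.ext z γ j = z γ := by
  rw [ext, dif_pos h]

theorem ext_of_lt (z : Γ → ℝ) {γ : Γ} {j : ℕ} (h : j < D.rank γ) :
    D.ext z γ j = D.ext z (D.pre γ) j +
      D.β * (D.ext z (D.mid γ) j - D.ext z (D.mid γ) (min (D.k γ) j)) +
      D.β * (D.a γ * (D.ext z (D.last γ) j - D.ext z (D.last γ) (min (D.l γ) j))) := by
  rw [ext, dif_neg (by omega)]

theorem rank_induction {p : Γ → Prop}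
    (h : ∀ γ, (0 < D.rank γ → p (D.pre γ) ∧ p (D.mid γ) ∧ p (D.last γ)) → p γ) (γ : Γ) : p γ := by
  induction hn : D.rank γ using Nat.strong_induction_on generalizing γ with
  | _ n ih =>
    subst hn
    exact h γ fun h0 => ⟨ih _ (D.rank_pre γ h0) _ rfl, ih _ (D.rank_mid γ h0) _ rfl,
      ih _ (D.rank_last γ h0) _ rfl⟩

theorem ext_ext (z : Γ → ℝ) (j : ℕ) (γ : Γ) :
    ∀ i, D.ext (fun δ => D.ext z δ j) γ i = D.ext z γ (min i j) := by
  refine D.rank_induction (p := fun γ => ∀ i, D.ext (fun δ => D.ext z δ j) γ i =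
    D.ext z γ (min i j)) (fun γ ih i => ?_) γ
  rcases le_or_gt (D.rank γ) i with h | h
  · rw [D.ext_of_le _ h]
    rcases le_total i j with hij | hij
    · rw [min_eq_left hij, D.ext_of_le _ h, D.ext_of_le _ (h.trans hij)]
    · rw [min_eq_right hij]
  · obtain ⟨h1, h2, h3⟩ := ih (by omega)
    rw [D.ext_of_lt _ h, D.ext_of_lt z (lt_of_le_of_lt (min_le_left i j) h), h1, h2, h2, h3, h3,
      min_assoc, min_assoc]

theorem ext_add (z w : Γ → ℝ) (γ : Γ) :
    ∀ i, D.ext (z + w) γ i = D.ext z γ i + D.ext w γ i := by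
  refine D.rank_induction (p := fun γ => ∀ i, D.ext (z + w) γ i = D.ext z γ i + D.ext w γ i)
    (fun γ ih i => ?_) γ
  rcases le_or_gt (D.rank γ) i with h | h
  · simp [D.ext_of_le _ h]
  · obtain ⟨h1, h2, h3⟩ := ih (by omega)
    simp only [D.ext_of_lt _ h, h1, h2, h3]
    ring

theorem ext_smul (c : ℝ) (z : Γ → ℝ) (γ : Γ) : ∀ i, D.ext (c • z) γ i = c * D.ext z γ i := by
  refine D.rank_induction (p := fun γ => ∀ i, D.ext (c • z) γ i = c * D.ext z γ i)
    (fun γ ih i => ?_) γ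
  rcases le_or_gt (D.rank γ) i with h | h
  · simp [D.ext_of_le _ h]
  · obtain ⟨h1, h2, h3⟩ := ih (by omega)
    simp only [D.ext_of_lt _ h, h1, h2, h3]
    ring

/-- Cut points beyond `j` do not contribute. -/
theorem ext_of_pre (z : Γ → ℝ) {γ : Γ} {j : ℕ} (h0 : 0 < D.rank γ) (h : j ≤ D.rank (D.pre γ)) :
    D.ext z γ j = D.ext z (D.pre γ) j := by
  rw [D.ext_of_lt z (lt_of_le_of_lt h (D.rank_pre γ h0)),
    min_eq_right (h.trans (D.pre_le_k γ h0)), min_eq_right (h.trans (D.pre_le_l γ h0))]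
  ring

theorem abs_ext_le (z : Γ → ℝ) (s : ℝ) (j : ℕ) (hs : ∀ δ, D.rank δ ≤ j → |z δ| ≤ s) (γ : Γ) :
    |D.ext z γ j| ≤ 2 * s := by
  have hs0 : 0 ≤ s := (abs_nonneg _).trans (hs D.root (by rw [D.rank_root]; omega))
  have key : ∀ i ≤ j, |D.ext z γ i| ≤ 2 * s := by
    refine D.rank_induction (p := fun γ => ∀ i ≤ j, |D.ext z γ i| ≤ 2 * s) (fun γ ih i hi => ?_) γ
    rcases le_or_gt (D.rank γ) i with h | h
    · rw [D.ext_of_le _ h]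
      linarith [hs γ (h.trans hi)]
    · have h0 : 0 < D.rank γ := by omega
      obtain ⟨h1, h2, h3⟩ := ih h0
      rcases le_or_gt i (D.rank (D.pre γ)) with h' | h'
      · rw [D.ext_of_pre z h0 h']
        exact h1 i hi
      · rw [D.ext_of_lt _ h, D.ext_of_le _ h'.le]
        have hb := D.β_nonneg
        have hb' := D.β_le
        have e1 := hs (D.pre γ) (h'.le.trans hi)
        have e2 : |D.ext z (D.mid γ) i - D.ext z (D.mid γ) (min (D.k γ) i)| ≤ 4 * s := by
          refine (abs_sub _ _).trans ?_
          linarith [h2 i hi, h2 (min (D.k γ) i) ((min_le_right _ _).trans hi)]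
        have e3 : |D.a γ * (D.ext z (D.last γ) i - D.ext z (D.last γ) (min (D.l γ) i))| ≤
            4 * s := by
          rw [abs_mul]
          have e4 : |D.ext z (D.last γ) i - D.ext z (D.last γ) (min (D.l γ) i)| ≤ 4 * s := by
            refine (abs_sub _ _).trans ?_
            linarith [h3 i hi, h3 (min (D.l γ) i) ((min_le_right _ _).trans hi)]
          have := mul_le_mul (D.a_le γ) e4 (abs_nonneg _) zero_le_one
          linarith
        have f1 := abs_add_le (z (D.pre γ) +
          D.β * (D.ext z (D.mid γ) i - D.ext z (D.mid γ) (min (D.k γ) i)))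
          (D.β * (D.a γ * (D.ext z (D.last γ) i - D.ext z (D.last γ) (min (D.l γ) i))))
        have f2 := abs_add_le (z (D.pre γ))
          (D.β * (D.ext z (D.mid γ) i - D.ext z (D.mid γ) (min (D.k γ) i)))
        rw [abs_mul D.β, abs_of_nonneg hb] at f1
        rw [abs_mul D.β, abs_of_nonneg hb] at f2
        have f3 := mul_le_mul hb' e2 (abs_nonneg _) (by norm_num)
        have f4 := mul_le_mul hb' e3 (abs_nonneg _) (by norm_num)
        linarith
  exact key j le_rfl

variable [TopologicalSpace Γ] [DiscreteTopology Γ]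

open BoundedContinuousFunction

/-- The canonical extension projection on bounded functions. -/
noncomputable def proj (j : ℕ) : (Γ →ᵇ ℝ) →L[ℝ] (Γ →ᵇ ℝ) :=
  LinearMap.mkContinuous
    { toFun := fun z => ofNormedAddCommGroupDiscrete (fun γ => D.ext z γ j) (2 * ‖z‖)
        (D.abs_ext_le z ‖z‖ j fun δ _ => z.norm_coe_le_norm δ)
      map_add' := fun z w => by
        ext γ
        exact D.ext_add z w γ j
      map_smul' := fun c z => by
        ext γ
        exact D.ext_smul c z γ j }
    2 fun z => (BoundedContinuousFunction.norm_le (by positivity)).2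
      (D.abs_ext_le z ‖z‖ j fun δ _ => z.norm_coe_le_norm δ)

theorem norm_proj_le (j : ℕ) (z : Γ →ᵇ ℝ) (s : ℝ) (hs : ∀ δ, D.rank δ ≤ j → |z δ| ≤ s) :
    ‖D.proj j z‖ ≤ 2 * s := by
  have hs0 : 0 ≤ s := (abs_nonneg _).trans (hs D.root (by rw [D.rank_root]; omega))
  exact (BoundedContinuousFunction.norm_le (by positivity)).2 (D.abs_ext_le z s j hs)

theorem norm_proj_le' (j : ℕ) (z : Γ →ᵇ ℝ) : ‖D.proj j z‖ ≤ 2 * ‖z‖ :=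
  D.norm_proj_le j z ‖z‖ fun δ _ => z.norm_coe_le_norm δ

theorem proj_proj (i j : ℕ) (z : Γ →ᵇ ℝ) : D.proj i (D.proj j z) = D.proj (min i j) z := by
  ext γ
  exact D.ext_ext z j γ i

/-- The Bourgain–Delbaen space. -/
def space : Submodule ℝ (Γ →ᵇ ℝ) where
  carrier := {z | Tendsto (fun n => D.proj n z) atTop (𝓝 z)}
  add_mem' {z w} hz hw := by
    simpa using Tendsto.add hz hw
  zero_mem' := by simp
  smul_mem' c z hz := by
    simpa using Tendsto.const_smul hz c

theorem proj_mem (n : ℕ) (z : Γ →ᵇ ℝ) : D.proj n z ∈ D.space := by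
  refine tendsto_const_nhds.congr' ?_
  filter_upwards [eventually_ge_atTop n] with m hm
  rw [proj_proj, min_eq_right hm]

theorem isClosed_space : IsClosed (D.space : Set (Γ →ᵇ ℝ)) := by
  refine isClosed_of_closure_subset fun z hz => ?_
  refine Metric.tendsto_atTop.2 fun ε hε => ?_
  obtain ⟨w, hw, hzw⟩ := Metric.mem_closure_iff.1 hz (ε / 4) (by positivity)
  obtain ⟨N, hN⟩ := Metric.tendsto_atTop.1 hw (ε / 4) (by positivity)
  refine ⟨N, fun n hn => ?_⟩
  have h1 := hN n hn
  have h2 : dist (D.proj n z) (D.proj n w) ≤ 2 * dist z w := by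
    rw [dist_eq_norm, dist_eq_norm, ← map_sub]
    exact D.norm_proj_le' n _
  have h3 := dist_triangle4 (D.proj n z) (D.proj n w) w z
  rw [dist_comm w z] at h3
  linarith

/-- The Bourgain–Delbaen space, as a type. -/
def Z : Type := D.space

noncomputable instance : NormedAddCommGroup D.Z := inferInstanceAs (NormedAddCommGroup D.space)

noncomputable instance : NormedSpace ℝ D.Z := inferInstanceAs (NormedSpace ℝ D.space)

instance : CompleteSpace D.Z := D.isClosed_space.completeSpace_coe

/-- The inclusion of the Bourgain–Delbaen space into the bounded functions. -/
noncomputable def incl : D.Z →L[ℝ] (Γ →ᵇ ℝ) := D.space.subtypeL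

theorem norm_incl (z : D.Z) : ‖D.incl z‖ = ‖z‖ := rfl

theorem incl_injective : Function.Injective D.incl := Subtype.val_injective

/-- The extension projections as operators on the Bourgain–Delbaen space. -/
noncomputable def projZ (n : ℕ) : D.Z →L[ℝ] D.Z :=
  ((D.proj n).comp D.incl).codRestrict D.space fun z => D.proj_mem n (D.incl z)

theorem incl_projZ (n : ℕ) (z : D.Z) : D.incl (D.projZ n z) = D.proj n (D.incl z) := rfl

theorem incl_projZ_apply (n : ℕ) (z : D.Z) (γ : Γ) :
    D.incl (D.projZ n z) γ = D.ext (D.incl z) γ n := rfl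

theorem projZ_projZ (i j : ℕ) (z : D.Z) : D.projZ i (D.projZ j z) = D.projZ (min i j) z :=
  D.incl_injective (D.proj_proj i j (D.incl z))

theorem projZ_tendsto (z : D.Z) : Tendsto (fun n => D.projZ n z) atTop (𝓝 z) :=
  tendsto_subtype_rng.2 z.2

theorem norm_le_of_projZ_eq {n : ℕ} {z : D.Z} (hz : D.projZ n z = z) (s : ℝ)
    (hs : ∀ δ, D.rank δ ≤ n → |D.incl z δ| ≤ s) : ‖z‖ ≤ 2 * s := by
  rw [← D.norm_incl, ← hz, D.incl_projZ]
  exact D.norm_proj_le n _ s hs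

/-- The range of `projZ n`. -/
noncomputable def level (n : ℕ) : Submodule ℝ D.Z :=
  LinearMap.range (D.projZ n : D.Z →ₗ[ℝ] D.Z)

theorem projZ_of_mem {n : ℕ} {z : D.Z} (hz : z ∈ D.level n) : D.projZ n z = z := by
  obtain ⟨w, rfl⟩ := hz
  exact (D.projZ_projZ n n w).trans (by rw [min_self]; rfl)

end BDData

namespace BDData

variable {Γ : Type} (D : BDData Γ) [TopologicalSpace Γ] [DiscreteTopology Γ]

open BoundedContinuousFunction

/-- Restriction to the indices of rank at most `n`. -/
noncomputable def restr (n : ℕ) : D.level n →ₗ[ℝ] ({γ // D.rank γ ≤ n} → ℝ) :=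
  LinearMap.pi fun γ =>
    ((evalCLM ℝ γ.1).comp D.incl).toLinearMap ∘ₗ (D.level n).subtype

/-- Restriction to the indices of rank at most `n` identifies the range of `projZ n` with the
space of all functions on these indices. -/
noncomputable def rangeEquiv (n : ℕ) : D.level n ≃ₗ[ℝ] ({γ // D.rank γ ≤ n} → ℝ) := by
  refine LinearEquiv.ofBijective (D.restr n) ⟨?_, ?_⟩
  · refine (injective_iff_map_eq_zero _).2 fun z hz => ?_
    have h := D.norm_le_of_projZ_eq (D.projZ_of_mem z.2) 0 fun δ hδ => by
      have := congrFun hz ⟨δ, hδ⟩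
      change D.incl z δ = 0 at this
      rw [this, abs_zero]
    exact Subtype.ext (norm_le_zero_iff.1 (by simpa using h))
  · intro u
    classical
    have : Fintype {γ // D.rank γ ≤ n} := (D.fin n).fintype
    let w : Γ →ᵇ ℝ := ofNormedAddCommGroupDiscrete
      (fun γ => if h : D.rank γ ≤ n then u ⟨γ, h⟩ else 0) ‖u‖ fun γ => by
        split_ifs with h
        · exact norm_le_pi_norm u _
        · simp
    let y : D.Z := (⟨D.proj n w, D.proj_mem n w⟩ : D.Z)
    have hy : D.incl y = D.proj n w := rfl
    refine ⟨⟨y, y, D.incl_injective ?_⟩, ?_⟩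
    · change D.incl (D.projZ n y) = _
      rw [D.incl_projZ, hy, D.proj_proj, min_self]
    · ext γ
      change D.ext w γ n = u γ
      rw [D.ext_of_le _ γ.2]
      exact dif_pos γ.2

instance finite_rank_le (n : ℕ) : Finite {γ // D.rank γ ≤ n} := D.fin n

theorem finiteDimensional_range (n : ℕ) :
    FiniteDimensional ℝ (D.level n) :=
  (D.rangeEquiv n).symm.finiteDimensional

theorem isLinfty : IsLinfty D.Z := by
  refine ⟨2, D.level, ?_, fun n =>
    D.finiteDimensional_range n, ?_, fun n => ?_⟩
  · rintro i j hij _ ⟨w, rfl⟩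
    exact ⟨D.projZ i w, (D.projZ_projZ j i w).trans (by rw [min_eq_right hij]; rfl)⟩
  · intro z
    refine mem_closure_of_tendsto (D.projZ_tendsto z) (Eventually.of_forall fun n => ?_)
    exact Set.mem_iUnion.2 ⟨n, z, rfl⟩
  · have := D.finiteDimensional_range n
    have hfin : Fintype {γ // D.rank γ ≤ n} := (D.fin n).fintype
    have hcard : Module.finrank ℝ (D.level n) =
        Fintype.card {γ // D.rank γ ≤ n} := by
      rw [(D.rangeEquiv n).finrank_eq, Module.finrank_fintype_fun_eq_card]
    let e : Fin (Module.finrank ℝ (D.level n)) ≃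
        {γ // D.rank γ ≤ n} := (finCongr hcard).trans (Fintype.equivFin _).symm
    let L := (D.rangeEquiv n).trans (LinearEquiv.funCongrLeft ℝ ℝ e)
    have hL : ∀ z i, L z i = D.incl z (e i).1 := fun z i => rfl
    refine ⟨L.toContinuousLinearEquiv, ?_⟩
    have h1 : ‖(L.toContinuousLinearEquiv :
        D.level n →L[ℝ] (Fin (Module.finrank ℝ (D.level n)) → ℝ))‖ ≤ 1 := by
      refine ContinuousLinearMap.opNorm_le_bound _ zero_le_one fun z => ?_
      rw [one_mul]
      refine (pi_norm_le_iff_of_nonneg (norm_nonneg _)).2 fun i => ?_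
      change ‖L z i‖ ≤ _
      rw [hL]
      exact (D.incl z).norm_coe_le_norm _
    have h2 : ‖(L.toContinuousLinearEquiv.symm :
        (Fin (Module.finrank ℝ (D.level n)) → ℝ) →L[ℝ] D.level n)‖ ≤ 2 := by
      refine ContinuousLinearMap.opNorm_le_bound _ zero_le_two fun u => ?_
      change ‖L.symm u‖ ≤ _
      refine D.norm_le_of_projZ_eq (D.projZ_of_mem (L.symm u).2) ‖u‖ fun δ hδ => ?_
      have h3 := hL (L.symm u) (e.symm ⟨δ, hδ⟩)
      rw [L.apply_symm_apply, e.apply_symm_apply] at h3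
      simp only at h3
      rw [← h3]
      exact norm_le_pi_norm u _
    calc _ ≤ (1 : ℝ) * 2 := mul_le_mul h1 h2 (ContinuousLinearMap.opNorm_nonneg _) zero_le_one
      _ = 2 := one_mul 2

/-- Partial sum projections, indexed so that the `0`-th one vanishes. -/
noncomputable def partialSum : ℕ → D.Z →L[ℝ] D.Z
  | 0 => 0
  | n + 1 => D.projZ n

/-- The decomposition of the Bourgain–Delbaen space by rank. -/
noncomputable def fdd : FDDOn D.Z :=
  FDDOn.ofPartialSums D.partialSum rfl
    (fun i j x => by
      rcases i with _ | i <;> rcases j with _ | j <;> simp [partialSum, projZ_projZ])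
    (fun n => by
      rcases n with _ | n
      · refine Submodule.finiteDimensional_of_le (S₂ := ⊥) ?_
        rintro _ ⟨x, rfl⟩
        rfl
      · exact D.finiteDimensional_range n)
    (fun x => (tendsto_add_atTop_iff_nat 1).1 (by simpa [partialSum] using D.projZ_tendsto x))

theorem fdd_S_succ (n : ℕ) (z : D.Z) : D.fdd.S (n + 1) z = D.projZ n z :=
  FDDOn.ofPartialSums_S _ _ _ _ _ (n + 1) z

end BDData

namespace BDData

variable {Γ : Type} (D : BDData Γ)

/-- `y` is an immediate successor of `x`. -/
def Succ (x y : Γ) : Prop := 0 < D.rank y ∧ D.pre y = x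

theorem root_anc (γ : Γ) : Relation.ReflTransGen D.Succ D.root γ := by
  refine D.rank_induction (p := fun γ => Relation.ReflTransGen D.Succ D.root γ) (fun γ ih => ?_) γ
  rcases Nat.eq_zero_or_pos (D.rank γ) with h | h
  · rw [D.eq_root γ h]
  · exact (ih h).1.tail ⟨h, rfl⟩

variable [TopologicalSpace Γ] [DiscreteTopology Γ]

open BoundedContinuousFunction

/-- Evaluation at an index. -/
noncomputable def ev (γ : Γ) : D.Z →L[ℝ] ℝ := (evalCLM ℝ γ).comp D.incl

theorem ev_apply (γ : Γ) (z : D.Z) : D.ev γ z = D.incl z γ := rfl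

theorem abs_ev_le (γ : Γ) (z : D.Z) : |D.ev γ z| ≤ ‖z‖ := (D.incl z).norm_coe_le_norm γ

theorem ext_eq_zero {m : ℕ} {z : D.Z} (hz : D.projZ m z = 0) (γ : Γ) {c : ℕ} (hc : c ≤ m) :
    D.ext (D.incl z) γ c = 0 := by
  have h := D.projZ_projZ c m z
  rw [hz, map_zero, min_eq_left hc] at h
  rw [← D.incl_projZ_apply, ← h, map_zero]
  rfl

theorem ext_eq_self {m : ℕ} {z : D.Z} (hz : D.projZ m z = z) (γ : Γ) {c : ℕ} (hc : m ≤ c) :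
    D.ext (D.incl z) γ c = D.incl z γ := by
  have h := D.projZ_projZ c m z
  rw [min_eq_right hc, hz] at h
  rw [← D.incl_projZ_apply, h]

theorem incl_eq_zero {m : ℕ} {z : D.Z} (hz : D.projZ m z = 0) {γ : Γ} (hγ : D.rank γ ≤ m) :
    D.incl z γ = 0 := by
  rw [← D.ext_of_le (D.incl z) hγ, D.ext_eq_zero hz _ le_rfl]

/-- The defining recursion at an index of rank beyond the support. -/
theorem incl_eq_node {N : ℕ} {z : D.Z} (hz : D.projZ N z = z) {γ : Γ} (hγ : N < D.rank γ) :
    D.incl z γ = D.incl z (D.pre γ) +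
      D.β * (D.incl z (D.mid γ) - D.ext (D.incl z) (D.mid γ) (D.k γ)) +
      D.β * (D.a γ * (D.incl z (D.last γ) - D.ext (D.incl z) (D.last γ) (D.l γ))) := by
  have hmin : ∀ δ c, D.ext (D.incl z) δ (min c N) = D.ext (D.incl z) δ c := by
    intro δ c
    rw [← D.ext_ext]
    congr 1
    ext δ'
    exact D.ext_eq_self hz δ' le_rfl
  rw [← D.ext_eq_self hz γ le_rfl, D.ext_of_lt _ hγ, hmin, hmin, D.ext_eq_self hz _ le_rfl,
    D.ext_eq_self hz _ le_rfl, D.ext_eq_self hz _ le_rfl]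

theorem incl_eq_of_anc {N : ℕ} {z : D.Z} (hz : D.projZ N z = z) {c γ : Γ}
    (h : Relation.ReflTransGen D.Succ c γ) (hc : N ≤ D.rank c) : D.incl z γ = D.incl z c := by
  suffices D.incl z γ = D.incl z c ∧ N ≤ D.rank γ from this.1
  induction h with
  | refl => exact ⟨rfl, hc⟩
  | @tail x y _ hxy ih =>
    obtain ⟨h0, rfl⟩ := hxy
    refine ⟨?_, ih.2.trans (D.rank_pre y h0).le⟩
    rw [← ih.1, ← D.ext_eq_self hz y le_rfl, D.ext_of_pre _ h0 ih.2, D.ext_eq_self hz _ le_rfl]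

/-- Limits of the individual terms of the recursion along an ultrafilter. -/
theorem exists_limit_term (z : ℕ → D.Z) (hfin : ∀ j, ∃ N, D.projZ N (z j) = z j)
    (hblk : ∀ m, ∀ᶠ j in atTop, D.projZ m (z j) = 0) (U : Ultrafilter Γ)
    (p : Γ → Γ) (cut : Γ → ℕ) (a : Γ → ℝ) (ha : ∀ γ, |a γ| ≤ 1) :
    ∃ b : D.Z →L[ℝ] ℝ, (∀ x, |b x| ≤ ‖x‖) ∧ ∀ᶠ j in atTop, ∃ L, |L| ≤ |b (z j)| ∧
      Tendsto (fun γ => a γ * (D.incl (z j) (p γ) - D.ext (D.incl (z j)) (p γ) (cut γ))) U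
        (𝓝 L) := by
  obtain ⟨b, hb, hlim⟩ := exists_ultrafilter_limit (fun γ => a γ • D.ev (p γ)) 1 (fun γ x => by
    change |a γ * D.ev (p γ) x| ≤ 1 * ‖x‖
    rw [abs_mul]
    exact mul_le_mul (ha γ) (D.abs_ev_le _ x) (abs_nonneg _) zero_le_one) U
  refine ⟨b, fun x => by simpa using hb x, ?_⟩
  by_cases hM : ∃ M, ∀ᶠ γ in (U : Filter Γ), cut γ ≤ M
  · obtain ⟨M, hM⟩ := hM
    filter_upwards [hblk M] with j hj
    refine ⟨b (z j), le_rfl, (hlim (z j)).congr' ?_⟩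
    filter_upwards [hM] with γ hγ
    rw [D.ext_eq_zero hj _ hγ, sub_zero]
    rfl
  · refine Eventually.of_forall fun j => ⟨0, by simp, tendsto_const_nhds.congr' ?_⟩
    obtain ⟨N, hN⟩ := hfin j
    have : ∀ᶠ γ in (U : Filter Γ), ¬ cut γ ≤ N :=
      Ultrafilter.eventually_not.2 fun h => hM ⟨N, h⟩
    filter_upwards [this] with γ hγ
    rw [D.ext_eq_self hN _ (not_le.1 hγ).le, sub_self, mul_zero]

theorem exists_limit_bound
    (hwf : WellFounded fun y x => D.Succ x y)
    (z : ℕ → D.Z) (hfin : ∀ j, ∃ N, D.projZ N (z j) = z j)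
    (hblk : ∀ m, ∀ᶠ j in atTop, D.projZ m (z j) = 0) (U : Ultrafilter Γ) (k : D.Z →L[ℝ] ℝ)
    (hk : ∀ x, Tendsto (fun γ => D.ev γ x) U (𝓝 (k x))) :
    ∃ b₁ b₂ : D.Z →L[ℝ] ℝ, (∀ x, |b₁ x| ≤ ‖x‖) ∧ (∀ x, |b₂ x| ≤ ‖x‖) ∧
      ∀ᶠ j in atTop, |k (z j)| ≤ D.β * (|b₁ (z j)| + |b₂ (z j)|) := by
  obtain ⟨δ, hδ, hmin⟩ := hwf.has_min
    {δ | ∀ᶠ γ in (U : Filter Γ), Relation.ReflTransGen D.Succ δ γ}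
    ⟨D.root, Eventually.of_forall D.root_anc⟩
  have hδ : ∀ᶠ γ in (U : Filter Γ), Relation.ReflTransGen D.Succ δ γ := hδ
  by_cases hcase : ∀ᶠ γ in (U : Filter Γ), γ = δ
  · refine ⟨0, 0, by simp, by simp, ?_⟩
    filter_upwards [hblk (D.rank δ)] with j hj
    have : k (z j) = 0 := by
      refine tendsto_nhds_unique (hk (z j)) (tendsto_const_nhds.congr' ?_)
      filter_upwards [hcase] with γ hγ
      rw [hγ, ev_apply, D.incl_eq_zero hj le_rfl]
    simp [this]
  have hex : ∀ γ, ∃ c, Relation.ReflTransGen D.Succ δ γ → γ ≠ δ →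
      D.Succ δ c ∧ Relation.ReflTransGen D.Succ c γ := by
    intro γ
    by_cases h : Relation.ReflTransGen D.Succ δ γ
    · rcases h.cases_head with h | ⟨c, hc⟩
      · exact ⟨δ, fun _ h' => absurd h.symm h'⟩
      · exact ⟨c, fun _ _ => hc⟩
    · exact ⟨δ, fun h' => absurd h' h⟩
  choose c hc using hex
  have hc' : ∀ᶠ γ in (U : Filter Γ), D.Succ δ (c γ) ∧ Relation.ReflTransGen D.Succ (c γ) γ := by
    filter_upwards [hδ, Ultrafilter.eventually_not.2 hcase] with γ h1 h2
    exact hc γ h1 h2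
  have hrank : ∀ M, ∀ᶠ γ in (U : Filter Γ), M < D.rank (c γ) := by
    intro M
    by_contra hM
    have hM' : ∀ᶠ γ in (U : Filter Γ), D.rank (c γ) ≤ M := by
      filter_upwards [Ultrafilter.eventually_not.2 hM] with γ hγ
      exact not_lt.1 hγ
    have hmem : (⋃ x ∈ {γ | D.rank γ ≤ M}, {γ | c γ = x}) ∈ U := by
      filter_upwards [hM'] with γ hγ
      simpa using hγ
    obtain ⟨x, -, hx⟩ := (Ultrafilter.finite_biUnion_mem_iff (D.fin M)).1 hmem
    have hx : ∀ᶠ γ in (U : Filter Γ), c γ = x := hx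
    obtain ⟨γ, h1, h2⟩ := (hc'.and hx).exists
    rw [h2] at h1
    refine hmin x ?_ h1.1
    change ∀ᶠ γ in (U : Filter Γ), _
    filter_upwards [hc', hx] with γ h3 h4
    rw [← h4]
    exact h3.2
  obtain ⟨b₁, hb₁, h₁⟩ := D.exists_limit_term z hfin hblk U (fun γ => D.mid (c γ))
    (fun γ => D.k (c γ)) 1 (by simp)
  obtain ⟨b₂, hb₂, h₂⟩ := D.exists_limit_term z hfin hblk U (fun γ => D.last (c γ))
    (fun γ => D.l (c γ)) (fun γ => D.a (c γ)) fun γ => D.a_le _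
  refine ⟨b₁, b₂, hb₁, hb₂, ?_⟩
  filter_upwards [h₁, h₂, hblk (D.rank δ)] with j ⟨L₁, hL₁, hl₁⟩ ⟨L₂, hL₂, hl₂⟩ hj
  obtain ⟨N, hN⟩ := hfin j
  have hkz : k (z j) = D.β * (L₁ + L₂) := by
    refine tendsto_nhds_unique (hk (z j)) (((hl₁.add hl₂).const_mul D.β).congr' ?_)
    filter_upwards [hc', hrank N] with γ h1 h2
    rw [ev_apply, D.incl_eq_of_anc hN h1.2 h2.le, D.incl_eq_node hN h2, h1.1.2,
      D.incl_eq_zero hj le_rfl]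
    simp only [Pi.one_apply]
    ring
  rw [hkz, abs_mul, abs_of_nonneg D.β_nonneg]
  refine mul_le_mul_of_nonneg_left ?_ D.β_nonneg
  exact (abs_add_le _ _).trans (add_le_add hL₁ hL₂)

theorem exists_ultrafilter_attains (x : D.Z) :
    ∃ (U : Ultrafilter Γ) (k : D.Z →L[ℝ] ℝ), (∀ y, |k y| ≤ ‖y‖) ∧
      (∀ y, Tendsto (fun γ => D.ev γ y) U (𝓝 (k y))) ∧ |k x| = ‖x‖ := by
  have hseq : ∀ n : ℕ, ∃ γ, ‖x‖ - 1 / (n + 1 : ℝ) ≤ |D.ev γ x| := by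
    intro n
    by_contra! h
    have hpos : (0 : ℝ) < 1 / (n + 1 : ℝ) := by positivity
    have h0 : 0 ≤ ‖x‖ - 1 / (n + 1 : ℝ) := (abs_nonneg _).trans (h D.root).le
    have := (BoundedContinuousFunction.norm_le (f := D.incl x) h0).2 fun γ => (h γ).le
    rw [D.norm_incl] at this
    linarith
  choose g hg using hseq
  let U : Ultrafilter Γ := (hyperfilter ℕ).map g
  obtain ⟨k, hk, hlim⟩ := exists_ultrafilter_limit D.ev 1 (fun γ y => by
    simpa using D.abs_ev_le γ y) U
  refine ⟨U, k, fun y => by simpa using hk y, hlim, le_antisymm (by simpa using hk x) ?_⟩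
  have h1 : Tendsto (fun n => |D.ev (g n) x|) (hyperfilter ℕ) (𝓝 |k x|) := by
    have := (hlim x).abs
    rwa [Ultrafilter.coe_map, tendsto_map'_iff] at this
  have h2 : Tendsto (fun n : ℕ => ‖x‖ - 1 / (n + 1 : ℝ)) (hyperfilter ℕ) (𝓝 (‖x‖ - 0)) :=
    (tendsto_const_nhds.sub tendsto_one_div_add_atTop_nhds_zero_nat).mono_left
      (by rw [← Nat.cofinite_eq_atTop]; exact hyperfilter_le_cofinite)
  rw [sub_zero] at h2
  exact le_of_tendsto_of_tendsto h2 h1 (Eventually.of_forall hg)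

theorem tendsto_zero_of_blocks
    (hwf : WellFounded fun y x => D.Succ x y)
    (z : ℕ → D.Z) (hz : ∀ j, ‖z j‖ ≤ 1) (hfin : ∀ j, ∃ N, D.projZ N (z j) = z j)
    (hblk : ∀ m, ∀ᶠ j in atTop, D.projZ m (z j) = 0) (f : D.Z →L[ℝ] ℝ) :
    Tendsto (fun j => f (z j)) atTop (𝓝 0) := by
  let T : Set ℝ := {τ | ∃ b : D.Z →L[ℝ] ℝ, (∀ x, |b x| ≤ ‖x‖) ∧ ∃ᶠ j in atTop, τ ≤ b (z j)}
  have hT0 : (0 : ℝ) ∈ T := ⟨0, by simp, Frequently.of_forall fun _ => le_rfl⟩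
  have hTb : BddAbove T := by
    refine ⟨1, ?_⟩
    rintro τ ⟨b, hb, hfr⟩
    obtain ⟨j, hj⟩ := hfr.exists
    exact hj.trans ((le_abs_self _).trans ((hb _).trans (hz j)))
  have hT : ∀ s, sSup T < s → ∀ b : D.Z →L[ℝ] ℝ, (∀ x, |b x| ≤ ‖x‖) →
      ∀ᶠ j in atTop, |b (z j)| < s := by
    intro s hs b hb
    have h1 : ∀ b : D.Z →L[ℝ] ℝ, (∀ x, |b x| ≤ ‖x‖) → ∀ᶠ j in atTop, b (z j) < s := by
      intro b hb
      have : ¬ ∃ᶠ j in atTop, s ≤ b (z j) := fun h =>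
        absurd (le_csSup hTb (show s ∈ T from ⟨b, hb, h⟩)) (not_le.2 hs)
      simpa using not_frequently.1 this
    filter_upwards [h1 b hb, h1 (-b) (by simpa using hb)] with j h2 h3
    rw [_root_.neg_apply] at h3
    exact abs_lt.2 ⟨by linarith, h2⟩
  have ht0 : sSup T = 0 := by
    by_contra hne
    have htpos : 0 < sSup T := lt_of_le_of_ne (le_csSup hTb hT0) (Ne.symm hne)
    set t := sSup T with ht
    obtain ⟨τ, ⟨b, hb, hfr⟩, hτ⟩ := exists_lt_of_lt_csSup ⟨0, hT0⟩
      (show 3 * t / 4 < sSup T by rw [← ht]; linarith)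
    obtain ⟨φ, hφ, hτφ⟩ := extraction_of_frequently_atTop hfr
    have hS := le_of_eventually_le_on_boundary
      {k : D.Z →L[ℝ] ℝ | (∀ x, k x ≤ ‖x‖) ∧ ∀ᶠ j in atTop, k (z j) ≤ 5 * t / 16}
      (fun k hk => hk.1) (fun x => ?_) (fun j => z (φ j)) (fun j => hz _) b
      (fun x => (le_abs_self _).trans (hb x)) τ (5 * t / 16) hτφ
      (fun k hk => hφ.tendsto_atTop.eventually hk.2)
    · linarith
    · obtain ⟨U, k, hk, hlim, hkx⟩ := D.exists_ultrafilter_attains x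
      obtain ⟨b₁, b₂, hb₁, hb₂, hle⟩ := D.exists_limit_bound hwf z hfin hblk U k hlim
      have habs : ∀ᶠ j in atTop, |k (z j)| ≤ 5 * t / 16 := by
        filter_upwards [hle, hT (5 * t / 4) (by linarith) b₁ hb₁,
          hT (5 * t / 4) (by linarith) b₂ hb₂] with j h1 h2 h3
        have := mul_le_mul D.β_le (add_le_add h2.le h3.le) (by positivity) (by norm_num)
        linarith
      rcases abs_choice (k x) with h | h
      · refine ⟨k, ⟨fun y => (le_abs_self _).trans (hk y), ?_⟩, by rw [← hkx, h]⟩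
        filter_upwards [habs] with j hj using (le_abs_self _).trans hj
      · refine ⟨-k, ⟨fun y => (neg_le_abs _).trans (hk y), ?_⟩, by rw [← hkx, h]; rfl⟩
        filter_upwards [habs] with j hj using (neg_le_abs _).trans hj
  have hC : 0 < ‖f‖ + 1 := by positivity
  rw [Metric.tendsto_nhds]
  intro ε hε
  filter_upwards [hT (ε / (‖f‖ + 1)) (by rw [ht0]; positivity) ((‖f‖ + 1)⁻¹ • f) (fun x => by
    have := f.le_opNorm x
    rw [_root_.smul_apply, smul_eq_mul, abs_mul, abs_of_pos (by positivity), inv_mul_le_iff₀ hC]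
    rw [Real.norm_eq_abs] at this
    nlinarith [norm_nonneg x])] with j hj
  rw [_root_.smul_apply, smul_eq_mul, abs_mul, abs_of_pos (by positivity), inv_mul_lt_iff₀ hC,
    mul_div_cancel₀ _ hC.ne'] at hj
  simpa [Real.dist_eq] using hj

theorem fdd_shrinking (hwf : WellFounded fun y x => D.Succ x y) : D.fdd.Shrinking := by
  intro z a b ⟨hsupp, hab⟩ hz f
  have hmono : ∀ n, n ≤ a n := by
    intro n
    induction n with
    | zero => exact Nat.zero_le _
    | succ n ih => have := (hsupp n).1; have := hab n; omega
  refine D.tendsto_zero_of_blocks hwf z (fun j => (hz j).le) (fun j => ⟨b j, ?_⟩) (fun m => ?_) f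
  · rw [← D.fdd_S_succ]
    exact D.fdd.S_eq_self_of_supp fun i hi => Nat.lt_succ_of_le ((hsupp j).2.1 hi).2
  · filter_upwards [eventually_gt_atTop m] with j hj
    rw [← D.fdd_S_succ]
    exact D.fdd.S_eq_zero_of_supp fun i hi => (hj.trans_le (hmono j)).trans_le ((hsupp j).2.1 hi).1

end BDData

section Basis

variable {V : Type*} [NormedAddCommGroup V] [NormedSpace ℝ V]

/-- The coefficients `α` induce a functional of lattice norm at most `r` on the span of `v`. -/
def DualBound (v : ℕ → V) (α : ℕ → ℝ) (r : ℝ) : Prop :=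
  ∀ (c : ℕ → ℝ) (N : ℕ),
    ∑ i ∈ Finset.range N, |α i| * |c i| ≤ r * ‖∑ i ∈ Finset.range N, c i • v i‖

/-- The basis `v` is `Ku`-unconditional. -/
def UncondWith (v : ℕ → V) (Ku : ℝ) : Prop :=
  ∀ (a ε : ℕ → ℝ) (N : ℕ), (∀ i, |ε i| ≤ 1) →
    ‖∑ i ∈ Finset.range N, (ε i * a i) • v i‖ ≤ Ku * ‖∑ i ∈ Finset.range N, a i • v i‖

variable {v : ℕ → V}

namespace DualBound

theorem mono {α α' : ℕ → ℝ} {r : ℝ} (h : DualBound v α r) (hα : ∀ i, |α' i| ≤ |α i|) :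
    DualBound v α' r := fun c N =>
  (Finset.sum_le_sum fun i _ => mul_le_mul_of_nonneg_right (hα i) (abs_nonneg _)).trans (h c N)

theorem le {α : ℕ → ℝ} {r s : ℝ} (h : DualBound v α r) (hrs : r ≤ s) : DualBound v α s :=
  fun c N => (h c N).trans (mul_le_mul_of_nonneg_right hrs (norm_nonneg _))

theorem smul {α : ℕ → ℝ} {r t : ℝ} (h : DualBound v α r) (ht : 0 ≤ t) :
    DualBound v (fun i => t * α i) (t * r) := fun c N => by
  have := mul_le_mul_of_nonneg_left (h c N) ht
  rw [Finset.mul_sum] at this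
  simpa only [abs_mul, abs_of_nonneg ht, mul_assoc] using this

theorem add {α α' : ℕ → ℝ} {r s : ℝ} (h : DualBound v α r) (h' : DualBound v α' s) :
    DualBound v (fun i => α i + α' i) (r + s) := fun c N => by
  rw [add_mul]
  refine le_trans ?_ (add_le_add (h c N) (h' c N))
  rw [← Finset.sum_add_distrib]
  refine Finset.sum_le_sum fun i _ => ?_
  rw [← add_mul]
  exact mul_le_mul_of_nonneg_right (abs_add_le _ _) (abs_nonneg _)

theorem zero {r : ℝ} (hr : 0 ≤ r) : DualBound v (fun _ => 0) r := fun c N => by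
  simp only [abs_zero, zero_mul, Finset.sum_const_zero]
  positivity

end DualBound

theorem abs_coord_le {Ku : ℝ} (hK : UncondWith v Ku) (hv : ∀ i, ‖v i‖ = 1) (c : ℕ → ℝ) {i N : ℕ}
    (hi : i < N) : |c i| ≤ Ku * ‖∑ i ∈ Finset.range N, c i • v i‖ := by
  have := hK c (fun j => if j = i then 1 else 0) N (fun j => by split_ifs <;> simp)
  rw [Finset.sum_eq_single_of_mem i (Finset.mem_range.2 hi) (fun j _ hj => by simp [hj])] at this
  simpa [norm_smul, hv] using this

/-- A bounded functional of the right size norming a given finite combination. -/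
theorem exists_dualBound_norming {Ku : ℝ} (hK : UncondWith v Ku) (hKu : 1 ≤ Ku) (c : ℕ → ℝ)
    (N : ℕ) : ∃ α, DualBound v α 1 ∧
      Ku * ∑ i ∈ Finset.range N, α i * c i = ‖∑ i ∈ Finset.range N, c i • v i‖ := by
  obtain ⟨f, hf, hfw⟩ := exists_dual_vector'' ℝ (∑ i ∈ Finset.range N, c i • v i)
  have hK0 : 0 < Ku := by linarith
  refine ⟨fun i => Ku⁻¹ * f (v i), fun c' M => ?_, ?_⟩
  · have h1 : ∀ i, ∃ ε : ℝ, |ε| ≤ 1 ∧ |f (v i)| * |c' i| = f (v i) * (ε * c' i) := by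
      intro i
      rcases le_total 0 (f (v i) * c' i) with h | h
      · refine ⟨1, by simp, ?_⟩
        rw [← abs_mul, abs_of_nonneg h]; ring
      · refine ⟨-1, by simp, ?_⟩
        rw [← abs_mul, abs_of_nonpos h]; ring
    choose ε hε h1 using h1
    have h2 : ∑ i ∈ Finset.range M, |Ku⁻¹ * f (v i)| * |c' i| =
        Ku⁻¹ * f (∑ i ∈ Finset.range M, (ε i * c' i) • v i) := by
      rw [map_sum, Finset.mul_sum]
      refine Finset.sum_congr rfl fun i _ => ?_
      rw [abs_mul, abs_of_pos (inv_pos.2 hK0), mul_assoc, h1, map_smul, smul_eq_mul]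
      ring
    rw [h2, one_mul, inv_mul_le_iff₀ hK0]
    refine le_trans ?_ (hK c' ε M hε)
    refine (le_abs_self _).trans ((f.le_opNorm _).trans ?_)
    exact mul_le_of_le_one_left (norm_nonneg _) hf
  · have : f (∑ i ∈ Finset.range N, c i • v i) = ‖∑ i ∈ Finset.range N, c i • v i‖ := hfw
    rw [← this, map_sum, Finset.mul_sum]
    refine Finset.sum_congr rfl fun i _ => ?_
    rw [map_smul, smul_eq_mul]
    field_simp

/-- A bounded coefficient sequence is induced by a bounded functional. -/
theorem DualBound.exists_functional (hb : IsSchauderBasis v) {α : ℕ → ℝ} {r : ℝ}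
    (h : DualBound v α r) : ∃ f : V →L[ℝ] ℝ, ∀ i, f (v i) = α i := by
  choose co hco huniq using hb
  have hadd : ∀ x y, co (x + y) = co x + co y := fun x y => by
    refine (huniq (x + y) (co x + co y) ?_).symm
    simpa [add_smul, Finset.sum_add_distrib] using (hco x).add (hco y)
  have hsmul : ∀ (t : ℝ) x, co (t • x) = t • co x := fun t x => by
    refine (huniq (t • x) (t • co x) ?_).symm
    simpa [mul_smul, Finset.smul_sum] using (hco x).const_smul t
  have hsingle : ∀ i, co (v i) = fun j => if j = i then 1 else 0 := fun i => by
    refine (huniq (v i) _ ?_).symm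
    refine tendsto_const_nhds.congr' ?_
    filter_upwards [eventually_gt_atTop i] with N hN
    simp [hN]
  have hbd : ∀ N x, |∑ i ∈ Finset.range N, α i * co x i| ≤ r * ‖x‖ := by
    intro N x
    refine ge_of_tendsto ((hco x).norm.const_mul r) ?_
    filter_upwards [eventually_ge_atTop N] with M hM
    refine le_trans ?_ (h (co x) M)
    refine (Finset.abs_sum_le_sum_abs _ _).trans ?_
    simp only [abs_mul]
    exact Finset.sum_le_sum_of_subset_of_nonneg (Finset.range_subset_range.2 hM)
      fun _ _ _ => by positivity
  let F : ℕ → V →L[ℝ] ℝ := fun N => LinearMap.mkContinuous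
    { toFun := fun x => ∑ i ∈ Finset.range N, α i * co x i
      map_add' := fun x y => by
        simp [hadd, mul_add, Finset.sum_add_distrib]
      map_smul' := fun t x => by
        simp only [hsmul, Pi.smul_apply, smul_eq_mul, RingHom.id_apply, Finset.mul_sum]
        exact Finset.sum_congr rfl fun i _ => by ring } r (hbd N)
  obtain ⟨f, -, hf⟩ := exists_ultrafilter_limit F r (fun N x => hbd N x) (hyperfilter ℕ)
  refine ⟨f, fun i => tendsto_nhds_unique (hf (v i)) (tendsto_const_nhds.congr' ?_)⟩
  have : ∀ᶠ N in atTop, α i = F N (v i) := by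
    filter_upwards [eventually_gt_atTop i] with N hN
    change α i = ∑ j ∈ Finset.range N, α j * co (v i) j
    simp [hsingle, hN]
  rw [← Nat.cofinite_eq_atTop] at this
  exact hyperfilter_le_cofinite this

/-- Sums along a subsequence as sums along the whole sequence. -/
theorem sum_subsequence {M : Type*} [AddCommMonoid M] {a : ℕ → ℕ} (ha : StrictMono a) (t : ℕ)
    (g : ℕ → ℕ → M) :
    ∑ i ∈ Finset.range t, g i (a i) = ∑ m ∈ Finset.range (a t),
      if m ∈ (Finset.range t).image a then g (Function.invFun a m) m else 0 := by
  rw [← Finset.sum_filter]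
  have : (Finset.range (a t)).filter (· ∈ (Finset.range t).image a) =
      (Finset.range t).image a := by
    ext m
    simp only [Finset.mem_filter, Finset.mem_range, Finset.mem_image, and_iff_right_iff_imp]
    rintro ⟨i, hi, rfl⟩
    exact ha hi
  rw [this, Finset.sum_image fun i _ j _ h => ha.injective h]
  refine Finset.sum_congr rfl fun i _ => ?_
  rw [Function.leftInverse_invFun ha.injective i]

theorem sum_smul_subsequence {a : ℕ → ℕ} (ha : StrictMono a) (t : ℕ) (c : ℕ → ℝ) :
    ∑ i ∈ Finset.range t, c i • v (a i) = ∑ m ∈ Finset.range (a t),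
      (if m ∈ (Finset.range t).image a then c (Function.invFun a m) else 0) • v m := by
  rw [sum_subsequence ha t (fun i m => c i • v m)]
  refine Finset.sum_congr rfl fun m _ => ?_
  rw [ite_smul, zero_smul]

theorem UncondWith.subsequence {Ku : ℝ} (hK : UncondWith v Ku) {a : ℕ → ℕ} (ha : StrictMono a) :
    UncondWith (fun i => v (a i)) Ku := by
  intro c ε t hε
  rw [sum_smul_subsequence (v := v) ha, sum_smul_subsequence (v := v) ha]
  refine le_trans (le_of_eq ?_) (hK _ (fun m => ε (Function.invFun a m)) (a t) fun m => hε _)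
  congr 1
  refine Finset.sum_congr rfl fun m _ => ?_
  split_ifs <;> simp

theorem DualBound.subsequence {α : ℕ → ℝ} {r : ℝ} (h : DualBound v α r) {a : ℕ → ℕ}
    (ha : StrictMono a) : DualBound (fun i => v (a i)) (fun i => α (a i)) r := by
  intro c t
  rw [sum_smul_subsequence (v := v) ha]
  refine le_trans (le_of_eq ?_) (h _ (a t))
  rw [sum_subsequence ha t (fun i m => |α m| * |c i|)]
  refine Finset.sum_congr rfl fun m _ => ?_
  split_ifs <;> simp

theorem sum_range_two_mul {M : Type*} [AddCommMonoid M] (f : ℕ → M) (t : ℕ) :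
    ∑ i ∈ Finset.range (2 * t), f i =
      ∑ n ∈ Finset.range t, f (2 * n) + ∑ n ∈ Finset.range t, f (2 * n + 1) := by
  induction t with
  | zero => simp
  | succ t ih =>
    rw [mul_add, mul_one, Finset.sum_range_succ, Finset.sum_range_succ, ih,
      Finset.sum_range_succ _ t, Finset.sum_range_succ _ t]
    abel

/-- Domination of interlacing subsequences without gaps. -/
theorem norm_sum_interlacing_le {Ku Cd : ℝ} (hK : UncondWith v Ku) (hCd : 0 < Cd)
    (hdom : ∀ p q : ℕ → ℕ, (∀ n, p n < q n) → (∀ n, q n < p (n + 1)) →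
      ∀ (co : ℕ → ℝ) (N : ℕ),
        ‖∑ n ∈ Finset.range N, co n • v (q n)‖ ≤ Cd * ‖∑ n ∈ Finset.range N, co n • v (p n)‖)
    (a q : ℕ → ℕ) (haq : ∀ i, a i < q i) (hqa : ∀ i, q i ≤ a (i + 1)) (co : ℕ → ℝ) (t : ℕ) :
    ‖∑ i ∈ Finset.range t, co i • v (q i)‖ ≤
      2 * Cd * Ku * ‖∑ i ∈ Finset.range t, co i • v (a i)‖ := by
  have ha : StrictMono a := strictMono_nat_of_lt_succ fun i => (haq i).trans_le (hqa i)
  let co' : ℕ → ℝ := fun i => if i < t then co i else 0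
  have hco' : ∀ w : ℕ → V, ∑ i ∈ Finset.range t, co i • w i =
      ∑ i ∈ Finset.range (2 * t), co' i • w i := by
    intro w
    refine (Finset.sum_congr rfl fun i hi => ?_).trans
      (Finset.sum_subset (Finset.range_subset_range.2 (by omega)) fun i _ hi => ?_)
    · simp [co', Finset.mem_range.1 hi]
    · simp only [Finset.mem_range] at hi
      simp [co', hi]
  have hu := hK.subsequence ha
  have heven := hu co' (fun i => if Even i then 1 else 0) (2 * t)
    (fun i => by split_ifs <;> simp)
  have hodd := hu co' (fun i => if Even i then 0 else 1) (2 * t)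
    (fun i => by split_ifs <;> simp)
  rw [sum_range_two_mul] at heven hodd
  simp only [Nat.not_even_two_mul_add_one, even_two_mul, if_true, if_false, one_mul, zero_mul,
    zero_smul, Finset.sum_const_zero, add_zero, zero_add] at heven hodd
  have d1 := hdom (fun n => a (2 * n)) (fun n => q (2 * n)) (fun n => haq _)
    (fun n => (hqa (2 * n)).trans_lt (ha (by omega))) (fun n => co' (2 * n)) t
  have d2 := hdom (fun n => a (2 * n + 1)) (fun n => q (2 * n + 1)) (fun n => haq _)
    (fun n => (hqa (2 * n + 1)).trans_lt (ha (by omega))) (fun n => co' (2 * n + 1)) t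
  rw [hco' fun i => v (q i), hco' fun i => v (a i), sum_range_two_mul]
  refine (norm_add_le _ _).trans ?_
  have e1 := mul_le_mul_of_nonneg_left heven hCd.le
  have e2 := mul_le_mul_of_nonneg_left hodd hCd.le
  linarith

end Basis

namespace FDDOn

variable {X : Type*} [NormedAddCommGroup X] [NormedSpace ℝ X] (E : FDDOn X)

theorem exists_norm_S_le [CompleteSpace X] : ∃ K : ℝ, 1 ≤ K ∧ ∀ N x, ‖E.S N x‖ ≤ K * ‖x‖ := by
  obtain ⟨C, hC⟩ := banach_steinhaus (g := E.S) fun x => by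
    obtain ⟨C, hC⟩ := (E.tendsto_S x).norm.bddAbove_range
    exact ⟨C, fun i => hC ⟨i, rfl⟩⟩
  refine ⟨max C 1, le_max_right _ _, fun N x => ((E.S N).le_opNorm x).trans ?_⟩
  exact mul_le_mul_of_nonneg_right ((hC N).trans (le_max_left _ _)) (norm_nonneg _)

theorem P_sub_S (i j m : ℕ) (hij : i ≤ j) (x : X) :
    E.P m (E.S j x - E.S i x) = if i ≤ m ∧ m < j then E.P m x else 0 := by
  rw [map_sub, P_S, P_S]
  split_ifs <;> first | omega | simp

/-- A nonzero vector supported in `[i, j)` has a first and last coordinate. -/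
theorem exists_suppExact {x : X} {i j : ℕ} (hij : i ≤ j) (hx : E.S j x - E.S i x = x)
    (hne : x ≠ 0) : ∃ a b, E.SuppExact x a b ∧ i ≤ a ∧ b < j := by
  classical
  have hsupp : ∀ m, E.P m x ≠ 0 → i ≤ m ∧ m < j := by
    intro m hm
    by_contra h
    rw [← hx, P_sub_S _ _ _ _ hij, if_neg h] at hm
    exact hm rfl
  have hnon : ((Finset.range j).filter fun m => E.P m x ≠ 0).Nonempty := by
    by_contra h
    refine hne ?_
    rw [← E.S_eq_self_of_supp (x := x) (m := j) fun m hm => (hsupp m hm).2, S_apply]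
    refine Finset.sum_eq_zero fun m hm => ?_
    by_contra h'
    exact h ⟨m, Finset.mem_filter.2 ⟨hm, h'⟩⟩
  have h1 := Finset.min'_mem _ hnon
  have h2 := Finset.max'_mem _ hnon
  have h3 : ∀ m, E.P m x ≠ 0 → m ∈ (Finset.range j).filter fun m => E.P m x ≠ 0 := fun m hm =>
    Finset.mem_filter.2 ⟨Finset.mem_range.2 (hsupp m hm).2, hm⟩
  refine ⟨_, _, ⟨Finset.min'_le _ _ h2, fun m hm => ⟨Finset.min'_le _ _ (h3 m hm),
    Finset.le_max' _ _ (h3 m hm)⟩, (Finset.mem_filter.1 h1).2, (Finset.mem_filter.1 h2).2⟩,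
    (hsupp _ (Finset.mem_filter.1 h1).2).1, (hsupp _ (Finset.mem_filter.1 h2).2).2⟩

/-- The left end point of the `j`-th interval cut out by `q`. -/
def lo (q : ℕ → ℕ) : ℕ → ℕ
  | 0 => 0
  | j + 1 => q j

theorem lo_le {q : ℕ → ℕ} (hq : StrictMono q) (j : ℕ) : lo q j ≤ q j := by
  rcases j with _ | j
  · exact Nat.zero_le _
  · exact (hq (Nat.lt_succ_self j)).le

theorem sum_blocks (q : ℕ → ℕ) (x : X) (r : ℕ) :
    ∑ j ∈ Finset.range r, (E.S (q j) x - E.S (lo q j) x) = E.S (lo q r) x := by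
  induction r with
  | zero => simp [lo, S_zero]
  | succ r ih => rw [Finset.sum_range_succ, ih]; simp [lo]

theorem q_le_lo {q : ℕ → ℕ} (hq : StrictMono q) {i j : ℕ} (hij : i < j) : q i ≤ lo q j := by
  rcases j with _ | j
  · omega
  · exact hq.monotone (Nat.lt_succ_iff.1 hij)

theorem block_block {i j : ℕ} (hij : i ≤ j) (x : X) :
    E.S j (E.S j x - E.S i x) - E.S i (E.S j x - E.S i x) = E.S j x - E.S i x := by
  simp only [map_sub, S_S, min_self, min_eq_left hij, min_eq_right hij]
  simp

end FDDOn

theorem sum_filter_nth {M : Type*} [AddCommMonoid M] (p : ℕ → Prop) [DecidablePred p]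
    (hp : {j | p j}.Infinite) (g : ℕ → M) (r : ℕ) :
    ∑ j ∈ (Finset.range r).filter p, g j = ∑ i ∈ Finset.range (Nat.count p r), g (Nat.nth p i) := by
  symm
  refine Finset.sum_bij (fun i _ => Nat.nth p i) (fun i hi => ?_) (fun i _ j _ h => ?_)
    (fun j hj => ?_) fun _ _ => rfl
  · exact Finset.mem_filter.2 ⟨Finset.mem_range.2 (Nat.nth_lt_of_lt_count (Finset.mem_range.1 hi)),
      Nat.nth_mem_of_infinite hp i⟩
  · exact Nat.nth_injective hp h
  · obtain ⟨h1, h2⟩ := Finset.mem_filter.1 hj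
    exact ⟨Nat.count p j, Finset.mem_range.2 (Nat.count_strict_mono h2 (Finset.mem_range.1 h1)),
      Nat.nth_count h2⟩

open FDDOn in
/-- Lower estimates at the right end points of consecutive intervals. -/
theorem exists_lower_estimate {V : Type*} [NormedAddCommGroup V] [NormedSpace ℝ V] {v : ℕ → V}
    (hv : ∀ i, ‖v i‖ = 1) {Ku Cd : ℝ} (hKu : 0 ≤ Ku) (hU : UncondWith v Ku) (hCd : 0 < Cd)
    (hdom : ∀ p q : ℕ → ℕ, (∀ n, p n < q n) → (∀ n, q n < p (n + 1)) →
      ∀ (co : ℕ → ℝ) (N : ℕ),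
        ‖∑ n ∈ Finset.range N, co n • v (q n)‖ ≤ Cd * ‖∑ n ∈ Finset.range N, co n • v (p n)‖)
    {X : Type*} [NormedAddCommGroup X] [NormedSpace ℝ X] (E : FDDOn X) {Clow : ℝ}
    (hClow : 0 ≤ Clow) (hlow : SubseqLowerEst E v Clow) {K : ℝ} (hK1 : 1 ≤ K)
    (hK : ∀ N x, ‖E.S N x‖ ≤ K * ‖x‖) :
    ∃ C : ℝ, 0 ≤ C ∧ ∀ q : ℕ → ℕ, StrictMono q → ∀ x r,
      ‖∑ j ∈ Finset.range r, ‖E.S (q j) x - E.S (lo q j) x‖ • v (q j)‖ ≤ C * ‖x‖ := by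
  classical
  have hblock : ∀ i j x, ‖E.S j x - E.S i x‖ ≤ 2 * K * ‖x‖ := fun i j x => by
    linarith [norm_sub_le (E.S j x) (E.S i x), hK i x, hK j x]
  by_cases hinf : {n | E.P n ≠ 0}.Infinite
  · refine ⟨2 * Cd * Ku * (Clow * K), by positivity, fun q hq x r => ?_⟩
    let y : ℕ → X := fun j => E.S (q j) x - E.S (lo q j) x
    let p : ℕ → Prop := fun j => (j < r ∧ y j ≠ 0) ∨ (r ≤ j ∧ ∃ w, E.S (q j) w - E.S (lo q j) w ≠ 0)
    have hp : {j | p j}.Infinite := by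
      rw [Set.infinite_iff_exists_gt]
      intro m
      obtain ⟨n, hn, hmn⟩ := hinf.exists_gt (q (max m r))
      have hex : ∃ j, n < q j := ⟨n + 1, lt_of_lt_of_le (Nat.lt_succ_self n) hq.le_apply⟩
      let j := Nat.find hex
      have hj : n < q j := Nat.find_spec hex
      have hjm : max m r < j := by
        by_contra h
        exact absurd (hq.monotone (not_lt.1 h)) (by omega)
      have hlo : lo q j ≤ n := by
        rcases hj' : j with _ | j'
        · exact Nat.zero_le _
        · exact not_lt.1 (Nat.find_min hex (m := j') (by change j' < j; omega))
      refine ⟨j, Or.inr ⟨(le_max_right m r).trans hjm.le, ?_⟩, (le_max_left m r).trans_lt hjm⟩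
      by_contra! hall
      refine hn (ContinuousLinearMap.ext fun w => ?_)
      have := E.P_sub_S (lo q j) (q j) n (lo_le hq j) w
      rw [hall w, map_zero, if_pos ⟨hlo, hj⟩] at this
      exact this.symm
    have hz : ∀ i, ∃ z a b, E.SuppExact z a b ∧ ‖z‖ = 1 ∧ lo q (Nat.nth p i) ≤ a ∧
        b < q (Nat.nth p i) ∧ (Nat.nth p i < r → ‖y (Nat.nth p i)‖ • z = y (Nat.nth p i)) := by
      intro i
      have key : ∀ w, E.S (q (Nat.nth p i)) w - E.S (lo q (Nat.nth p i)) w ≠ 0 →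
          ∃ z a b, E.SuppExact z a b ∧ ‖z‖ = 1 ∧ lo q (Nat.nth p i) ≤ a ∧
            b < q (Nat.nth p i) ∧
            ‖E.S (q (Nat.nth p i)) w - E.S (lo q (Nat.nth p i)) w‖ • z =
              E.S (q (Nat.nth p i)) w - E.S (lo q (Nat.nth p i)) w := by
        intro w hw
        set u := E.S (q (Nat.nth p i)) w - E.S (lo q (Nat.nth p i)) w with hu
        have hun : ‖u‖ ≠ 0 := norm_ne_zero_iff.2 hw
        obtain ⟨a, b, hab, h1, h2⟩ := E.exists_suppExact (x := ‖u‖⁻¹ • u)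
          (lo_le hq (Nat.nth p i)) (by
            rw [map_smul, map_smul, ← smul_sub, hu, E.block_block (lo_le hq _)])
          (smul_ne_zero (inv_ne_zero hun) hw)
        refine ⟨_, a, b, hab, ?_, h1, h2, ?_⟩
        · rw [norm_smul, norm_inv, norm_norm, inv_mul_cancel₀ hun]
        · rw [smul_smul, mul_inv_cancel₀ hun, one_smul]
      rcases Nat.nth_mem_of_infinite hp i with ⟨h1, h2⟩ | ⟨h1, w, hw⟩
      · obtain ⟨z, a, b, h⟩ := key x h2
        exact ⟨z, a, b, h.1, h.2.1, h.2.2.1, h.2.2.2.1, fun _ => h.2.2.2.2⟩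
      · obtain ⟨z, a, b, h⟩ := key w hw
        exact ⟨z, a, b, h.1, h.2.1, h.2.2.1, h.2.2.2.1, fun h' => absurd h' (not_lt.2 h1)⟩
    choose z a b hab hz1 hloa hbq hyz using hz
    have hqa : ∀ i, q (Nat.nth p i) ≤ a (i + 1) := fun i =>
      (q_le_lo hq (Nat.nth_strictMono hp (Nat.lt_succ_self i))).trans (hloa (i + 1))
    have hsum : ∀ g : ℕ → V, ∑ j ∈ Finset.range r, ‖y j‖ • g j =
        ∑ i ∈ Finset.range (Nat.count p r), ‖y (Nat.nth p i)‖ • g (Nat.nth p i) := by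
      intro g
      rw [← sum_filter_nth p hp (fun j => ‖y j‖ • g j), Finset.sum_filter_of_ne]
      intro j hj hne
      refine Or.inl ⟨Finset.mem_range.1 hj, fun h => hne ?_⟩
      rw [h, norm_zero, zero_smul]
    have hsumX : ∑ i ∈ Finset.range (Nat.count p r), ‖y (Nat.nth p i)‖ • z i =
        E.S (lo q r) x := by
      rw [← E.sum_blocks, ← Finset.sum_filter_of_ne (s := Finset.range r) (p := p),
        sum_filter_nth p hp]
      · exact Finset.sum_congr rfl fun i hi =>
          hyz i (Nat.nth_lt_of_lt_count (Finset.mem_range.1 hi))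
      · exact fun j hj hne => Or.inl ⟨Finset.mem_range.1 hj, hne⟩
    change ‖∑ j ∈ Finset.range r, ‖y j‖ • v (q j)‖ ≤ _
    rw [hsum fun j => v (q j)]
    have h1 := norm_sum_interlacing_le hU hCd hdom a (fun i => q (Nat.nth p i))
      (fun i => (hab i).1.trans_lt (hbq i)) hqa (fun i => ‖y (Nat.nth p i)‖) (Nat.count p r)
    have h2 := hlow z a b ⟨hab, fun i => (hbq i).trans_le (hqa i)⟩ hz1
      (fun i => ‖y (Nat.nth p i)‖) (Nat.count p r)
    rw [hsumX] at h2
    have h3 := h2.trans (mul_le_mul_of_nonneg_left (hK (lo q r) x) hClow)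
    refine h1.trans ?_
    rw [mul_assoc (2 * Cd * Ku), mul_assoc Clow]
    exact mul_le_mul_of_nonneg_left h3 (by positivity)
  · rw [Set.not_infinite] at hinf
    obtain ⟨M, hM⟩ := hinf.bddAbove
    refine ⟨(M + 2) * (2 * K), by positivity, fun q hq x r => ?_⟩
    have hzero : ∀ j, M + 2 ≤ j → E.S (q j) x - E.S (lo q j) x = 0 := by
      intro j hj
      by_contra hne
      obtain ⟨a, b, hab, ha, -⟩ := E.exists_suppExact (lo_le hq j)
        (E.block_block (lo_le hq j) x) hne
      have h1 : a ≤ M := hM fun h => hab.2.2.1 (by rw [h]; rfl)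
      obtain ⟨j, rfl⟩ : ∃ i, j = i + 1 := ⟨j - 1, by omega⟩
      have h2 : j ≤ q j := hq.le_apply
      change q j ≤ a at ha
      omega
    have h1 : ∑ j ∈ Finset.range r, ‖E.S (q j) x - E.S (lo q j) x‖ ≤
        ∑ j ∈ Finset.range (M + 2), 2 * K * ‖x‖ := by
      calc _ ≤ ∑ j ∈ Finset.range (max r (M + 2)), ‖E.S (q j) x - E.S (lo q j) x‖ :=
            Finset.sum_le_sum_of_subset_of_nonneg
              (Finset.range_subset_range.2 (le_max_left _ _)) fun _ _ _ => norm_nonneg _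
        _ = ∑ j ∈ Finset.range (M + 2), ‖E.S (q j) x - E.S (lo q j) x‖ := by
            symm
            refine Finset.sum_subset (Finset.range_subset_range.2 (le_max_right _ _))
              fun j _ hj => ?_
            rw [hzero j (by simpa using hj), norm_zero]
        _ ≤ _ := Finset.sum_le_sum fun j _ => hblock _ _ x
    refine (norm_sum_le _ _).trans ?_
    simp only [norm_smul, norm_norm, hv, mul_one]
    refine h1.trans (le_of_eq ?_)
    simp
    ring

/-- Labels of the indices of the Bourgain–Delbaen construction. -/
inductive BDTree : Type
  | root : BDTree
  | node (n : ℕ) (η ζ ξ : BDTree) (k l : ℕ) (a : ℝ) (u : ℕ) : BDTree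

namespace BDTree

/-- The rank of a label. -/
def rank : BDTree → ℕ
  | root => 0
  | node n _ _ _ _ _ _ _ => n

/-- The predecessor of a label. -/
def pre : BDTree → BDTree
  | root => root
  | node _ η _ _ _ _ _ _ => η

/-- The second label a label refers to. -/
def mid : BDTree → BDTree
  | root => root
  | node _ _ ζ _ _ _ _ _ => ζ

/-- The third label a label refers to. -/
def last : BDTree → BDTree
  | root => root
  | node _ _ _ ξ _ _ _ _ => ξ

/-- The first cut point. -/
def cutMid : BDTree → ℕ
  | root => 0
  | node _ _ _ _ k _ _ _ => k

/-- The second cut point. -/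
def cutLast : BDTree → ℕ
  | root => 0
  | node _ _ _ _ _ l _ _ => l

/-- The scalar of a label. -/
def coef : BDTree → ℝ
  | root => 0
  | node _ _ _ _ _ _ a _ => a

end BDTree

section Construction

variable {X V : Type*} [NormedAddCommGroup X] [NormedSpace ℝ X] [NormedAddCommGroup V]
  [NormedSpace ℝ V]

/-- Parameters of the construction: for each rank `n`, finitely many functionals `g n u` depending
only on one coordinate and finitely many scalars `A n`. -/
structure BDParams (E : FDDOn X) where
  β : ℝ
  β_pos : 0 < β
  β_le : β ≤ 1 / 8
  c : ℝ
  c_pos : 0 < c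
  g : ℕ → ℕ → X →L[ℝ] ℝ
  g_P : ∀ n u x, g (n + 1) u (E.P n x) = g (n + 1) u x
  s : ℕ → ℕ
  A : ℕ → Finset ℝ
  A_le : ∀ n, ∀ a ∈ A n, |a| ≤ 1

namespace BDParams

variable {E : FDDOn X} (p : BDParams E)

theorem g_S {n : ℕ} (hn : 0 < n) (u j : ℕ) (x : X) :
    p.g n u (E.S j x) = if n ≤ j then p.g n u x else 0 := by
  obtain ⟨n, rfl⟩ : ∃ m, n = m + 1 := ⟨n - 1, by omega⟩
  rw [← p.g_P, E.P_S]
  split_ifs <;> first | omega | simp [p.g_P]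

open BDTree

/-- The functional on `X` carried by a label. -/
noncomputable def φ : BDTree → X →L[ℝ] ℝ
  | root => 0
  | node n η ζ ξ k l a u => φ η + p.β • (φ ζ).comp (ContinuousLinearMap.id ℝ X - E.S k) +
      p.β • a • (φ ξ).comp (ContinuousLinearMap.id ℝ X - E.S l) + p.g n u

theorem φ_root : p.φ root = 0 := rfl

theorem φ_node (n : ℕ) (η ζ ξ : BDTree) (k l : ℕ) (a : ℝ) (u : ℕ) (x : X) :
    p.φ (node n η ζ ξ k l a u) x = p.φ η x + p.β * (p.φ ζ x - p.φ ζ (E.S k x)) +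
      p.β * (a * (p.φ ξ x - p.φ ξ (E.S l x))) + p.g n u x := by
  simp [φ]

/-- The coefficient sequence carried by a label. -/
noncomputable def α : BDTree → ℕ → ℝ
  | root => fun _ => 0
  | node n η ζ _ k _ a _ => fun m => α η m + p.β * (if k < m then α ζ m else 0) +
      if m = n then a else 0

theorem α_root (m : ℕ) : p.α root m = 0 := rfl

theorem α_node (n : ℕ) (η ζ ξ : BDTree) (k l : ℕ) (a : ℝ) (u m : ℕ) :
    p.α (node n η ζ ξ k l a u) m =
      p.α η m + p.β * (if k < m then p.α ζ m else 0) + if m = n then a else 0 := rfl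

/-- A label is substantially larger than its predecessor. -/
def Large (v : ℕ → V) (t : BDTree) : Prop :=
  t.pre.rank = 0 ∨
  (∃ x, p.c * ‖x‖ < |p.φ t (E.S (t.rank - 1) x - E.S (t.pre.rank - 1) x)|) ∨
  ¬ DualBound v (fun m => if t.pre.rank ≤ m ∧ m < t.rank then p.α t m else 0) p.c

/-- Admissible labels. -/
def Adm (v : ℕ → V) : BDTree → Prop
  | root => True
  | node n η ζ ξ k l a u => Adm v η ∧ Adm v ζ ∧ Adm v ξ ∧
      (η.rank ≤ k ∧ k < n ∧ η.rank ≤ l ∧ l < n ∧ ζ.rank < n ∧ ξ.rank < n) ∧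
      a ∈ p.A n ∧ u < p.s n ∧ (∀ x, |p.φ (node n η ζ ξ k l a u) x| ≤ 2 * ‖x‖) ∧
      DualBound v (p.α (node n η ζ ξ k l a u)) 2 ∧ p.Large v (node n η ζ ξ k l a u)

variable {v : ℕ → V}

theorem Adm.pre {t : BDTree} (h : p.Adm v t) : p.Adm v t.pre := by
  cases t
  · trivial
  · exact h.1

theorem Adm.mid {t : BDTree} (h : p.Adm v t) : p.Adm v t.mid := by
  cases t
  · trivial
  · exact h.2.1

theorem Adm.last {t : BDTree} (h : p.Adm v t) : p.Adm v t.last := by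
  cases t
  · trivial
  · exact h.2.2.1

theorem Adm.abs_φ_le {t : BDTree} (h : p.Adm v t) (x : X) : |p.φ t x| ≤ 2 * ‖x‖ := by
  cases t
  · simp [φ_root]
  · exact h.2.2.2.2.2.2.1 x

theorem Adm.dualBound {t : BDTree} (h : p.Adm v t) : DualBound v (p.α t) 2 := by
  cases t
  · exact DualBound.zero zero_le_two
  · exact h.2.2.2.2.2.2.2.1

theorem Adm.large {t : BDTree} (h : p.Adm v t) : p.Large v t := by
  cases t
  · exact Or.inl rfl
  · exact h.2.2.2.2.2.2.2.2

theorem Adm.rank_pos {n : ℕ} {η ζ ξ : BDTree} {k l : ℕ} {a : ℝ} {u : ℕ}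
    (h : p.Adm v (node n η ζ ξ k l a u)) : 0 < n := by
  have := h.2.2.2.1
  omega

theorem φ_S_of_rank_le {t : BDTree} (h : p.Adm v t) :
    ∀ {N : ℕ}, t.rank ≤ N → ∀ x, p.φ t (E.S N x) = p.φ t x := by
  induction t with
  | root => intros; simp [φ_root]
  | node n η ζ ξ k l a u h1 h2 h3 =>
    intro N hN x
    have hN : n ≤ N := hN
    obtain ⟨r1, r2, r3, r4, r5, r6⟩ := h.2.2.2.1
    rw [φ_node, φ_node, E.S_S, E.S_S, min_eq_left (by omega), min_eq_left (by omega),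
      h1 h.1 (by omega), h2 h.2.1 (by omega), h3 h.2.2.1 (by omega),
      p.g_S (h.rank_pos), if_pos hN]

theorem φ_S_pre {t : BDTree} (h : p.Adm v t) {j : ℕ} (hj : j ≤ t.pre.rank) (x : X) :
    p.φ t (E.S j x) = p.φ t.pre (E.S j x) := by
  cases t with
  | root => rfl
  | node n η ζ ξ k l a u =>
    have hj : j ≤ η.rank := hj
    obtain ⟨r1, r2, r3, r4, r5, r6⟩ := h.2.2.2.1
    rw [φ_node, E.S_S, E.S_S, min_eq_right (by omega), min_eq_right (by omega),
      p.g_S (h.rank_pos), if_neg (by omega)]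
    simp [BDTree.pre]

theorem α_pre {t : BDTree} (h : p.Adm v t) {m : ℕ} (hm : m ≤ t.pre.rank) :
    p.α t m = p.α t.pre m := by
  cases t with
  | root => rfl
  | node n η ζ ξ k l a u =>
    have hm : m ≤ η.rank := hm
    obtain ⟨r1, r2, r3, r4, r5, r6⟩ := h.2.2.2.1
    rw [α_node, if_neg (by omega), if_neg (by omega)]
    simp [BDTree.pre]

theorem Adm.eq_root {t : BDTree} (h : p.Adm v t) (h0 : t.rank = 0) : t = root := by
  cases t with
  | root => rfl
  | node n η ζ ξ k l a u =>
    have := h.rank_pos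
    have : n = 0 := h0
    omega

theorem finite_adm (v : ℕ → V) (n : ℕ) : {t | p.Adm v t ∧ t.rank ≤ n}.Finite := by
  induction n with
  | zero =>
    refine (Set.finite_singleton root).subset ?_
    rintro t ⟨h, h0⟩
    exact h.eq_root p (Nat.le_zero.1 h0)
  | succ n ih =>
    let T := {t | p.Adm v t ∧ t.rank ≤ n}
    let f : BDTree × BDTree × BDTree × ℕ × ℕ × ℝ × ℕ → BDTree := fun y =>
      node (n + 1) y.1 y.2.1 y.2.2.1 y.2.2.2.1 y.2.2.2.2.1 y.2.2.2.2.2.1 y.2.2.2.2.2.2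
    have hfin : (f '' (T ×ˢ T ×ˢ T ×ˢ Set.Iio (n + 1) ×ˢ Set.Iio (n + 1) ×ˢ
        (p.A (n + 1) : Set ℝ) ×ˢ Set.Iio (p.s (n + 1)))).Finite :=
      Set.Finite.image f (ih.prod (ih.prod (ih.prod ((Set.finite_Iio _).prod
        ((Set.finite_Iio _).prod ((Finset.finite_toSet _).prod (Set.finite_Iio _)))))))
    refine (ih.union hfin).subset ?_
    rintro t ⟨h, hr⟩
    rcases Nat.lt_or_ge n t.rank with hlt | hle
    · right
      have hr : t.rank = n + 1 := by omega
      cases t with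
      | root => exact absurd hr (by simp [rank])
      | node m η ζ ξ k l a u =>
        replace hr : m = n + 1 := hr
        subst hr
        obtain ⟨h1, h2, h3, ⟨r1, r2, r3, r4, r5, r6⟩, h5, h6, -⟩ := h
        have e1 : η.rank ≤ n := by omega
        exact ⟨(η, ζ, ξ, k, l, a, u), ⟨⟨h1, e1⟩, ⟨h2, Nat.lt_succ_iff.1 r5⟩,
          ⟨h3, Nat.lt_succ_iff.1 r6⟩, r2, r4, h5, h6⟩, rfl⟩
    · exact Or.inl ⟨h, hle⟩

/-- The index set of the construction. -/
def Index (v : ℕ → V) : Type := {t // p.Adm v t}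

instance : TopologicalSpace (p.Index v) := ⊥

instance : DiscreteTopology (p.Index v) := ⟨rfl⟩

/-- The Bourgain–Delbaen data carried by the admissible labels. -/
noncomputable def data (v : ℕ → V) : BDData (p.Index v) where
  rank γ := γ.1.rank
  root := ⟨root, trivial⟩
  eq_root γ h := Subtype.ext (γ.2.eq_root p h)
  rank_root := rfl
  fin n := ((p.finite_adm v n).preimage Subtype.val_injective.injOn).subset fun γ h => ⟨γ.2, h⟩
  pre γ := ⟨γ.1.pre, γ.2.pre⟩
  mid γ := ⟨γ.1.mid, γ.2.mid⟩
  last γ := ⟨γ.1.last, γ.2.last⟩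
  k γ := γ.1.cutMid
  l γ := γ.1.cutLast
  a γ := γ.1.coef
  β := p.β
  β_nonneg := p.β_pos.le
  β_le := p.β_le
  a_le := by
    rintro ⟨t, h⟩
    cases t with
    | root => simp [coef]
    | node n η ζ ξ k l a u => exact p.A_le n a h.2.2.2.2.1
  rank_pre := by
    rintro ⟨t, h⟩ h0
    cases t with
    | root => exact absurd h0 (lt_irrefl 0)
    | node n η ζ ξ k l a u =>
      have := h.2.2.2.1
      change η.rank < n
      omega
  rank_mid := by
    rintro ⟨t, h⟩ h0
    cases t with
    | root => exact absurd h0 (lt_irrefl 0)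
    | node n η ζ ξ k l a u => exact h.2.2.2.1.2.2.2.2.1
  rank_last := by
    rintro ⟨t, h⟩ h0
    cases t with
    | root => exact absurd h0 (lt_irrefl 0)
    | node n η ζ ξ k l a u => exact h.2.2.2.1.2.2.2.2.2
  pre_le_k := by
    rintro ⟨t, h⟩ h0
    cases t with
    | root => exact absurd h0 (lt_irrefl 0)
    | node n η ζ ξ k l a u => exact h.2.2.2.1.1
  pre_le_l := by
    rintro ⟨t, h⟩ h0
    cases t with
    | root => exact absurd h0 (lt_irrefl 0)
    | node n η ζ ξ k l a u => exact h.2.2.2.1.2.2.1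

theorem ext_φ (x : X) (γ : p.Index v) :
    ∀ j, (p.data v).ext (fun δ => p.φ δ.1 x) γ j = p.φ γ.1 (E.S j x) := by
  refine (p.data v).rank_induction (p := fun γ => ∀ j,
    (p.data v).ext (fun δ => p.φ δ.1 x) γ j = p.φ γ.1 (E.S j x)) (fun γ ih j => ?_) γ
  rcases le_or_gt ((p.data v).rank γ) j with h | h
  · rw [(p.data v).ext_of_le _ h, p.φ_S_of_rank_le γ.2 h]
  · obtain ⟨h1, h2, h3⟩ := ih (by omega)
    rw [(p.data v).ext_of_lt _ h, h1, h2, h2, h3, h3]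
    obtain ⟨t, ht⟩ := γ
    cases t with
    | root => exact absurd h (Nat.not_lt_zero _)
    | node n η ζ ξ k l a u =>
      have h : j < n := h
      rw [φ_node, E.S_S, E.S_S, p.g_S ht.rank_pos, if_neg (by omega), add_zero]
      rfl

/-- The embedding of `X` into the Bourgain–Delbaen space. -/
theorem exists_embedding (v : ℕ → V) : ∃ T : X →L[ℝ] (p.data v).Z,
    ∀ x γ, (p.data v).incl (T x) γ = p.φ γ.1 x := by
  let ψ : X →L[ℝ] BoundedContinuousFunction (p.Index v) ℝ := LinearMap.mkContinuous
    { toFun := fun x => BoundedContinuousFunction.ofNormedAddCommGroupDiscrete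
        (fun γ => p.φ γ.1 x) (2 * ‖x‖) fun γ => γ.2.abs_φ_le p x
      map_add' := fun x y => by
        ext γ
        exact map_add (p.φ γ.1) x y
      map_smul' := fun t x => by
        ext γ
        exact map_smul (p.φ γ.1) t x }
    2 fun x => (BoundedContinuousFunction.norm_le (by positivity)).2 fun γ => γ.2.abs_φ_le p x
  have hmem : ∀ x, ψ x ∈ (p.data v).space := by
    intro x
    have h : ∀ j, (p.data v).proj j (ψ x) = ψ (E.S j x) := fun j => by
      ext γ
      exact p.ext_φ x γ j
    change Tendsto (fun n => (p.data v).proj n (ψ x)) atTop (𝓝 (ψ x))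
    simp only [h]
    exact (ψ.continuous.tendsto x).comp (E.tendsto_S x)
  exact ⟨ψ.codRestrict (p.data v).space hmem, fun x γ => rfl⟩

end BDParams

end Construction

section Approximation

variable {X V : Type*} [NormedAddCommGroup X] [NormedSpace ℝ X] [NormedAddCommGroup V]
  [NormedSpace ℝ V] {E : FDDOn X}

theorem FDDOn.S_sub_S_comp_S {a b : ℕ} (hab : a ≤ b) (j : ℕ) (x : X) :
    E.S b (E.S j x) - E.S a (E.S j x) = E.S (max a (min b j)) x - E.S a x := by
  rw [E.S_S, E.S_S]
  rcases le_total j a with h | h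
  · rw [min_eq_right (h.trans hab), min_eq_right h, max_eq_left h]
    simp
  · rw [min_eq_left h, max_eq_right (le_min hab h)]

namespace BDParams

/-- The finite sets of functionals and scalars are sufficiently fine nets. -/
structure IsFine (p : BDParams E) (K δ : ℝ) : Prop where
  one_le_K : 1 ≤ K
  norm_S_le : ∀ N x, ‖E.S N x‖ ≤ K * ‖x‖
  δ_nonneg : 0 ≤ δ
  δ_le_one : δ ≤ 1
  δ_le : δ * (4 * K ^ 2) ≤ p.β / 2
  c_le : p.c * (2 * K) ≤ p.β / 2
  net : ∀ n (f : X →L[ℝ] ℝ), (∀ x, |f x| ≤ ‖x‖) → (∀ x, f (E.P n x) = f x) →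
    ∃ u < p.s (n + 1), ∀ x, |p.g (n + 1) u x - f x| ≤ δ * (1 / 2) ^ (n + 1) * ‖x‖
  exists_zero : ∀ n, ∃ u < p.s (n + 1), p.g (n + 1) u = 0
  zero_mem : ∀ n, 0 ∈ p.A n
  A_net : ∀ n t, |t| ≤ 1 → ∃ a ∈ p.A n, |a - t| ≤ δ * (1 / 2) ^ n

open BDTree

variable {p : BDParams E} {K δ : ℝ}

theorem IsFine.exists_approx (hp : p.IsFine K δ) (v : ℕ → V) (N : ℕ) :
    ∀ k ≤ N, ∀ f : X →L[ℝ] ℝ, (∀ x, f (E.S N x - E.S k x) = f x) →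
      (∀ i j x, |f (E.S j x - E.S i x)| ≤ ‖x‖) →
      ∃ t : BDTree, p.Adm v t ∧ (k < N → t.rank = N) ∧ (k = N → t.rank = 0) ∧
        (∀ x, p.φ t (E.S k x) = 0) ∧ (∀ m, p.α t m = 0) ∧
        ∀ x, |p.φ t x - f x| ≤ δ * ((1 / 2) ^ k - (1 / 2) ^ N) * ‖x‖ := by
  induction N using Nat.strong_induction_on with
  | _ N ih =>
  intro k hk f hf hb
  rcases hk.eq_or_lt with rfl | hkN
  · have hf0 : ∀ x, f x = 0 := fun x => by rw [← hf]; simp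
    exact ⟨root, trivial, fun h => absurd h (lt_irrefl _), fun _ => rfl, by simp [φ_root],
      p.α_root, by simp [φ_root, hf0]⟩
  obtain ⟨M, rfl⟩ : ∃ M, N = M + 1 := ⟨N - 1, by omega⟩
  -- composition with a difference of partial sum projections
  let cut : ℕ → ℕ → X →L[ℝ] ℝ := fun a b => f.comp (E.S b - E.S a)
  have hcut : ∀ a b x, cut a b x = f (E.S b x - E.S a x) := fun a b x => rfl
  have hcutS : ∀ a b, a ≤ b → ∀ i j x, cut a b (E.S j x - E.S i x) =
      f (E.S (max a (min b j)) x - E.S (max a (min b i)) x) := by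
    intro a b hab i j x
    rw [hcut, map_sub (E.S b), map_sub (E.S a)]
    congr 1
    have h1 := E.S_sub_S_comp_S hab i x
    have h2 := E.S_sub_S_comp_S hab j x
    calc _ = (E.S b (E.S j x) - E.S a (E.S j x)) - (E.S b (E.S i x) - E.S a (E.S i x)) := by abel
      _ = _ := by rw [h1, h2]; abel
  have hcutcut : ∀ a b, a ≤ b → ∀ x, cut a b (E.S b x - E.S a x) = cut a b x := by
    intro a b hab x
    rw [hcutS a b hab]
    simp [hcut, hab]
  have hcutb : ∀ a b, a ≤ b → ∀ i j x, |cut a b (E.S j x - E.S i x)| ≤ ‖x‖ := by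
    intro a b hab i j x
    rw [hcutS a b hab]
    exact hb _ _ _
  let Q : ℕ → Prop := fun k' => k ≤ k' ∧ ∀ i j x, |cut k' M (E.S j x - E.S i x)| ≤ p.β * ‖x‖
  have hQM : ∃ k', Q k' := by
    refine ⟨M, by omega, fun i j x => ?_⟩
    rw [hcut]
    simpa using mul_nonneg p.β_pos.le (norm_nonneg x)
  classical
  obtain ⟨k', ⟨hkk', hk'⟩, hmin⟩ : ∃ k', Q k' ∧ ∀ m < k', ¬ Q m :=
    ⟨Nat.find hQM, Nat.find_spec hQM, fun m => Nat.find_min hQM⟩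
  have hk'M : k' ≤ M := by
    by_contra h
    refine hmin M (by omega) ⟨by omega, fun i j x => ?_⟩
    rw [hcut]
    simpa using mul_nonneg p.β_pos.le (norm_nonneg x)
  obtain ⟨η, hη, hη1, hη2, hη3, hη4, hη5⟩ := ih k' (by omega) k hkk' (cut k k')
    (hcutcut k k' hkk') (hcutb k k' hkk')
  obtain ⟨ζ, hζ, hζ1, hζ2, hζ3, hζ4, hζ5⟩ := ih M (by omega) k' hk'M (p.β⁻¹ • cut k' M)
    (fun x => by simp only [smul_apply, hcutcut k' M hk'M])
    (fun i j x => by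
      rw [smul_apply, smul_eq_mul, abs_mul, abs_of_pos (inv_pos.2 p.β_pos),
        inv_mul_le_iff₀ p.β_pos]
      exact hk' i j x)
  have hPM : ∀ x, E.P M x = E.S (M + 1) x - E.S M x := fun x => by rw [E.S_succ_sub]
  obtain ⟨u, hu, hg⟩ := hp.net M (f.comp (E.P M))
    (fun x => by
      rw [ContinuousLinearMap.comp_apply, hPM]
      exact hb _ _ _)
    (fun x => by simp [E.idem])
  have hηr : η.rank ≤ k' := by
    rcases hkk'.eq_or_lt with h | h
    · rw [hη2 h]; omega
    · rw [hη1 h]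
  have hζr : ζ.rank ≤ M := by
    rcases hk'M.eq_or_lt with h | h
    · rw [hζ2 h]; omega
    · rw [hζ1 h]
  let t : BDTree := node (M + 1) η ζ root k' k' 0 u
  have hφ : ∀ x, p.φ t x = p.φ η x + p.β * p.φ ζ x + p.g (M + 1) u x := by
    intro x
    rw [φ_node, hζ3]
    simp
  have hα : ∀ m, p.α t m = 0 := by
    intro m
    rw [α_node, hη4, hζ4]
    simp
  have herr : ∀ x, |p.φ t x - f x| ≤ δ * ((1 / 2) ^ k - (1 / 2) ^ (M + 1)) * ‖x‖ := by
    intro x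
    have e1 := hη5 x
    have e2 := hζ5 x
    have e3 := hg x
    have ef : f x = cut k k' x + p.β * (p.β⁻¹ * cut k' M x) + f (E.P M x) := by
      rw [mul_inv_cancel_left₀ p.β_pos.ne', hcut, hcut, hPM, ← hf x]
      simp only [map_sub]
      ring
    rw [hφ, ef]
    have e4 : p.β * |p.φ ζ x - p.β⁻¹ * cut k' M x| ≤
        δ * ((1 / 2) ^ k' - (1 / 2) ^ M) * ‖x‖ := by
      refine (mul_le_of_le_one_left (abs_nonneg _) ?_).trans e2
      linarith [p.β_le]
    calc _ = |(p.φ η x - cut k k' x) + p.β * (p.φ ζ x - p.β⁻¹ * cut k' M x) +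
          (p.g (M + 1) u x - f (E.P M x))| := by ring_nf
      _ ≤ |p.φ η x - cut k k' x| + p.β * |p.φ ζ x - p.β⁻¹ * cut k' M x| +
          |p.g (M + 1) u x - f (E.P M x)| := by
        refine (abs_add_le _ _).trans (add_le_add_left ((abs_add_le _ _).trans_eq ?_) _)
        rw [abs_mul, abs_of_pos p.β_pos]
      _ ≤ _ := by
        refine (add_le_add (add_le_add e1 e4) e3).trans_eq ?_
        ring
  have herr' : ∀ x, |p.φ t x - f x| ≤ δ * ‖x‖ := by
    intro x
    refine (herr x).trans (mul_le_mul_of_nonneg_right ?_ (norm_nonneg x))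
    refine mul_le_of_le_one_right hp.δ_nonneg ?_
    have h1 : (1 / 2 : ℝ) ^ k ≤ 1 := pow_le_one₀ (by norm_num) (by norm_num)
    have h2 : (0 : ℝ) ≤ (1 / 2) ^ (M + 1) := by positivity
    linarith
  have hlarge : p.Large v t := by
    rcases hkk'.eq_or_lt with h | h
    · exact Or.inl (hη2 h)
    · right
      left
      have hnQ := hmin (k' - 1) (by omega)
      have : ∃ i j x, p.β * ‖x‖ < |cut (k' - 1) M (E.S j x - E.S i x)| := by
        by_contra hcon
        push Not at hcon
        exact hnQ ⟨by omega, hcon⟩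
      obtain ⟨i, j, x, hx⟩ := this
      have hK0 : 0 ≤ K := zero_le_one.trans hp.one_le_K
      have hn2 : ∀ a b y, ‖E.S a y - E.S b y‖ ≤ 2 * K * ‖y‖ := fun a b y =>
        (norm_sub_le _ _).trans (by linarith [hp.norm_S_le a y, hp.norm_S_le b y])
      set y := E.S j x - E.S i x with hy
      have hy1 : ‖y‖ ≤ 2 * K * ‖x‖ := hn2 _ _ _
      refine ⟨y, ?_⟩
      have hr : t.rank - 1 = M := rfl
      have hr' : t.pre.rank = k' := hη1 h
      rw [hr, hr']
      set w := E.S M y - E.S (k' - 1) y with hw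
      have hw1 : ‖w‖ ≤ 4 * K ^ 2 * ‖x‖ := (hn2 _ _ _).trans (by nlinarith)
      have h1 : |p.φ t w - f w| ≤ δ * (4 * K ^ 2 * ‖x‖) :=
        (herr' w).trans (mul_le_mul_of_nonneg_left hw1 hp.δ_nonneg)
      have h2 : δ * (4 * K ^ 2 * ‖x‖) ≤ p.β / 2 * ‖x‖ := by
        nlinarith [hp.δ_le, norm_nonneg x]
      have h3 : p.c * ‖y‖ ≤ p.β / 2 * ‖x‖ := by
        nlinarith [hp.c_le, norm_nonneg x, p.c_pos]
      have h4 : |f w| ≤ |p.φ t w| + |p.φ t w - f w| := by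
        have := abs_sub_abs_le_abs_sub (f w) (p.φ t w)
        rw [abs_sub_comm] at this
        linarith
      have h5 : p.β * ‖x‖ < |f w| := hx
      linarith
  refine ⟨t, ⟨hη, hζ, trivial, ⟨hηr, by omega, hηr, by omega, by omega, Nat.succ_pos _⟩,
    hp.zero_mem _, hu, fun x => ?_, ?_, hlarge⟩, fun _ => rfl, fun h => by omega, fun x => ?_,
    hα, herr⟩
  · have h1 := herr' x
    have h2 : |f x| ≤ ‖x‖ := by
      rw [← hf]
      exact hb _ _ _
    have h3 : |p.φ t x| ≤ |f x| + |p.φ t x - f x| := by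
      have := abs_sub_abs_le_abs_sub (p.φ t x) (f x)
      linarith
    have h4 : δ * ‖x‖ ≤ 1 * ‖x‖ := mul_le_mul_of_nonneg_right hp.δ_le_one (norm_nonneg x)
    change |p.φ t x| ≤ _
    linarith
  · exact (DualBound.zero zero_le_two).mono fun m => by
      change |p.α t m| ≤ _
      rw [hα]
  · rw [hφ, hη3, p.g_S (Nat.succ_pos M), if_neg (by omega)]
    have := hζ3 (E.S k x)
    rw [E.S_S, min_eq_right hkk'] at this
    rw [this]
    ring

/-- The embedding is bounded below. -/
theorem IsFine.exists_large_value (hp : p.IsFine K δ) (v : ℕ → V) (x : X) : ∃ t : BDTree, p.Adm v t ∧ ‖x‖ ≤ 8 * K * |p.φ t x| := by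
  have hK := hp.one_le_K
  have hK0 : 0 < 2 * K := by linarith
  rcases eq_or_ne x 0 with rfl | hx
  · exact ⟨root, trivial, by simp⟩
  obtain ⟨f, hf1, hf2⟩ := exists_dual_vector ℝ x (norm_ne_zero_iff.2 hx)
  have hf2 : f x = ‖x‖ := hf2
  have hfle : ∀ y, |f y| ≤ ‖y‖ := fun y => by simpa [hf1] using f.le_opNorm y
  obtain ⟨N, hN⟩ := ((Metric.tendsto_nhds.1 (E.tendsto_S x)) (‖x‖ / 2)
    (half_pos (norm_pos_iff.2 hx))).exists
  rw [dist_eq_norm] at hN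
  obtain ⟨t, ht, -, -, -, -, herr⟩ := hp.exists_approx v N 0 (Nat.zero_le N)
    ((2 * K)⁻¹ • f.comp (E.S N))
    (fun y => by simp [E.S_zero, E.S_S])
    (fun i j y => by
      rw [smul_apply, smul_eq_mul, abs_mul, abs_of_pos (inv_pos.2 hK0),
        inv_mul_le_iff₀ hK0, ContinuousLinearMap.comp_apply, map_sub, E.S_S, E.S_S]
      refine (hfle _).trans ((norm_sub_le _ _).trans ?_)
      linarith [hp.norm_S_le (min N i) y, hp.norm_S_le (min N j) y])
  refine ⟨t, ht, ?_⟩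
  have h1 := herr x
  have h2 : δ * ((1 / 2) ^ 0 - (1 / 2) ^ N) ≤ δ := by
    refine mul_le_of_le_one_right hp.δ_nonneg ?_
    have : (0 : ℝ) ≤ (1 / 2) ^ N := by positivity
    linarith
  have h3 : ‖x‖ / 2 ≤ f (E.S N x) := by
    have := (abs_le.1 (hfle (E.S N x - x))).1
    rw [map_sub, hf2] at this
    linarith
  rw [smul_apply, smul_eq_mul, ContinuousLinearMap.comp_apply] at h1
  have h4 : |p.φ t x - (2 * K)⁻¹ * f (E.S N x)| ≤ δ * ‖x‖ :=
    h1.trans (mul_le_mul_of_nonneg_right h2 (norm_nonneg x))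
  have h5 := (abs_le.1 h4).1
  have h6 : δ * (8 * K) ≤ 1 := by
    have := hp.δ_le
    have := p.β_le
    nlinarith [mul_le_mul_of_nonneg_left (show K ≤ K ^ 2 by nlinarith) hp.δ_nonneg]
  have h7 : (8 * K) * ((2 * K)⁻¹ * f (E.S N x)) = 4 * f (E.S N x) := by
    field_simp
    ring
  have h8 : (8 * K) * ((2 * K)⁻¹ * f (E.S N x) - δ * ‖x‖) ≤ 8 * K * |p.φ t x| :=
    mul_le_mul_of_nonneg_left (by linarith [le_abs_self (p.φ t x)]) (by linarith)
  nlinarith [norm_nonneg x]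

end BDParams

end Approximation

section LowerEstimate

/-- The sequence with values `a j` at `q j` for `j ∈ [i, r)` and zero elsewhere. -/
noncomputable def spread (q : ℕ → ℕ) (i r : ℕ) (a : ℕ → ℝ) (m : ℕ) : ℝ :=
  ∑ j ∈ Finset.Ico i r, if m = q j then a j else 0

theorem spread_apply {q : ℕ → ℕ} (hq : StrictMono q) (i r : ℕ) (a : ℕ → ℝ) (j : ℕ) :
    spread q i r a (q j) = if i ≤ j ∧ j < r then a j else 0 := by
  simp [spread, hq.injective.eq_iff, Finset.sum_ite_eq, Finset.mem_Ico]

theorem spread_of_notMem {q : ℕ → ℕ} (i r : ℕ) (a : ℕ → ℝ) {m : ℕ} (hm : ∀ j, q j ≠ m) :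
    spread q i r a m = 0 :=
  Finset.sum_eq_zero fun j _ => if_neg (hm j).symm

theorem spread_smul (q : ℕ → ℕ) (i r : ℕ) (a : ℕ → ℝ) (t : ℝ) (m : ℕ) :
    spread q i r (fun j => t * a j) m = t * spread q i r a m := by
  simp [spread, Finset.mul_sum]

theorem abs_spread_le {q : ℕ → ℕ} (hq : StrictMono q) {i r i' r' : ℕ} (hi : i' ≤ i) (hr : r ≤ r')
    (a : ℕ → ℝ) (m : ℕ) : |spread q i r a m| ≤ |spread q i' r' a m| := by
  by_cases hm : ∃ j, q j = m
  · obtain ⟨j, rfl⟩ := hm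
    rw [spread_apply hq, spread_apply hq]
    split_ifs with h1 h2
    · exact le_rfl
    · omega
    · simp
    · simp
  · push Not at hm
    simp [spread_of_notMem _ _ _ hm]

theorem abs_spread_sub_le {q : ℕ → ℕ} (hq : StrictMono q) {i r : ℕ} {a b : ℕ → ℝ} {δ : ℝ}
    (hδ : 0 ≤ δ) (h : ∀ j, i ≤ j → j < r → |b j - a j| ≤ δ * (1 / 2) ^ q j) (m : ℕ) :
    |spread q i r b m - spread q i r a m| ≤ δ * (1 / 2) ^ m := by
  by_cases hm : ∃ j, q j = m
  · obtain ⟨j, rfl⟩ := hm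
    rw [spread_apply hq, spread_apply hq]
    split_ifs with h1
    · exact h j h1.1 h1.2
    · rw [sub_zero, abs_zero]
      positivity
  · push Not at hm
    rw [spread_of_notMem _ _ _ hm, spread_of_notMem _ _ _ hm, sub_zero, abs_zero]
    positivity

variable {X V : Type*} [NormedAddCommGroup X] [NormedSpace ℝ X] [NormedAddCommGroup V]
  [NormedSpace ℝ V] {E : FDDOn X} {v : ℕ → V} {Ku : ℝ}

theorem dualBound_of_abs_le_geometric (hU : UncondWith v Ku) (hKu : 0 ≤ Ku)
    (hv : ∀ i, ‖v i‖ = 1) {e : ℕ → ℝ} {δ : ℝ} (hδ : 0 ≤ δ) (he : ∀ m, |e m| ≤ δ * (1 / 2) ^ m) :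
    DualBound v e (2 * δ * Ku) := by
  intro c N
  set w := ‖∑ i ∈ Finset.range N, c i • v i‖ with hw
  have hw0 : 0 ≤ w := norm_nonneg _
  calc ∑ i ∈ Finset.range N, |e i| * |c i|
      ≤ ∑ i ∈ Finset.range N, (1 / 2 : ℝ) ^ i * (δ * (Ku * w)) := by
        refine Finset.sum_le_sum fun i hi => ?_
        refine (mul_le_mul (he i) (abs_coord_le hU hv c (Finset.mem_range.1 hi))
          (abs_nonneg _) (by positivity)).trans_eq ?_
        ring
    _ = (∑ i ∈ Finset.range N, (1 / 2 : ℝ) ^ i) * (δ * (Ku * w)) := by rw [Finset.sum_mul]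
    _ ≤ 2 * (δ * (Ku * w)) := by
        refine mul_le_mul_of_nonneg_right ?_ (by positivity)
        exact (summable_geometric_two.sum_le_tsum _ fun i _ => by positivity).trans_eq
          tsum_geometric_two
    _ = 2 * δ * Ku * w := by ring

theorem DualBound.of_close {α α' : ℕ → ℝ} {r δ : ℝ} (h : DualBound v α r) (hU : UncondWith v Ku)
    (hKu : 0 ≤ Ku) (hv : ∀ i, ‖v i‖ = 1) (hδ : 0 ≤ δ)
    (he : ∀ m, |α' m - α m| ≤ δ * (1 / 2) ^ m) : DualBound v α' (r + 2 * δ * Ku) :=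
  (h.add (dualBound_of_abs_le_geometric hU hKu hv hδ he)).mono fun i => by simp

theorem DualBound.abs_le {α : ℕ → ℝ} {r : ℝ} (h : DualBound v α r) (hv : ∀ i, ‖v i‖ = 1) (m : ℕ) :
    |α m| ≤ r := by
  have := h (fun i => if i = m then 1 else 0) (m + 1)
  rw [Finset.sum_eq_single_of_mem m (by simp) (fun j _ hj => by simp [hj]),
    Finset.sum_eq_single_of_mem m (by simp) (fun j _ hj => by simp [hj])] at this
  simpa [hv] using this

namespace BDParams

open BDTree FDDOn

variable {p : BDParams E} {K δ : ℝ}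

theorem IsFine.exists_lower (hp : p.IsFine K δ) (hU : UncondWith v Ku) (hKu : 0 ≤ Ku)
    (hv : ∀ i, ‖v i‖ = 1) (hδ : 2 * δ * Ku ≤ p.β / 2) {C : ℝ} (hC : 2 * p.β * C ≤ 1)
    {q : ℕ → ℕ} (hq : StrictMono q) (hq0 : 0 < q 0)
    (hlow : ∀ x r, ‖∑ j ∈ Finset.range r, ‖E.S (q j) x - E.S (lo q j) x‖ • v (q j)‖ ≤ C * ‖x‖)
    (ξ : ℕ → p.Index v) (hξ : ∀ j, (ξ j).1.rank < q j) (r : ℕ) :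
    ∀ i ≤ r, ∀ a : ℕ → ℝ, DualBound v (spread q i r a) 1 →
      ∃ (γ : p.Index v) (b : ℕ → ℝ), γ.1.rank = (if i < r then lo q r else 0) ∧
        (∀ j, i ≤ j → j < r → |b j - a j| ≤ δ * (1 / 2) ^ q j) ∧
        (∀ m, p.α γ.1 m = spread q i r b m) ∧
        (∀ x, p.φ γ.1 x = p.β * ∑ j ∈ Finset.Ico i r,
          b j * (p.φ (ξ j).1 x - p.φ (ξ j).1 (E.S (lo q j) x))) ∧
        ∀ z : p.Index v → ℝ, z (p.data v).root = 0 → (∀ γ' m, (p.data v).rank γ' = q m →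
          (p.data v).ext z γ' (q m - 1) = z γ') →
          z γ = p.β * ∑ j ∈ Finset.Ico i r,
            b j * (z (ξ j) - (p.data v).ext z (ξ j) (lo q j)) := by
  have hβ := p.β_pos
  have hlolt : ∀ j, lo q j < q j := fun j => by
    rcases j with _ | j
    · exact hq0
    · exact hq (Nat.lt_succ_self j)
  have hlomono : Monotone (lo q) := monotone_nat_of_le_succ fun j => lo_le hq j
  induction r using Nat.strong_induction_on with
  | _ r ih =>
  intro i hi a ha
  rcases hi.eq_or_lt with rfl | hir
  · refine ⟨⟨root, trivial⟩, a, by simp [rank], fun j h1 h2 => by omega, fun m => by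
      simp [α_root, spread], fun x => by simp [φ_root], fun z hz0 hz => ?_⟩
    have hz0' : z ⟨root, trivial⟩ = 0 := hz0
    simpa using hz0'
  obtain ⟨R, rfl⟩ : ∃ R, r = R + 1 := ⟨r - 1, by omega⟩
  let Q : ℕ → Prop := fun i' => i ≤ i' ∧ DualBound v (spread q i' R a) p.β
  have hQR : Q R := ⟨by omega, (DualBound.zero p.β_pos.le).mono fun m => by simp [spread]⟩
  classical
  obtain ⟨i', ⟨hii', hi'⟩, hmin⟩ : ∃ i', Q i' ∧ ∀ m < i', ¬ Q m :=
    ⟨Nat.find ⟨R, hQR⟩, Nat.find_spec ⟨R, hQR⟩, fun m => Nat.find_min ⟨R, hQR⟩⟩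
  have hi'R : i' ≤ R := by
    by_contra h
    exact hmin R (by omega) hQR
  obtain ⟨η, bη, hη1, hη2, hη3, hη4, hη5⟩ := ih i' (by omega) i hii' a
    (ha.mono fun m => abs_spread_le hq le_rfl (by omega) a m)
  obtain ⟨ζ, bζ, hζ1, hζ2, hζ3, hζ4, hζ5⟩ := ih R (by omega) i' hi'R (fun j => p.β⁻¹ * a j) (by
    have := hi'.smul (inv_nonneg.2 hβ.le)
    rw [inv_mul_cancel₀ hβ.ne'] at this
    exact this.mono fun m => by rw [spread_smul])
  have haR : |a R| ≤ 1 := by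
    have := ha.abs_le hv (q R)
    rwa [spread_apply hq, if_pos ⟨by omega, by omega⟩] at this
  obtain ⟨b0, hb0, hb0'⟩ := hp.A_net (q R) (a R) haR
  obtain ⟨u, hu, hg⟩ := hp.exists_zero (q R - 1)
  have hqR : q R - 1 + 1 = q R := by have := hlolt R; omega
  rw [hqR] at hu hg
  have hηr : η.1.rank ≤ lo q i' := by
    rw [hη1]
    split_ifs
    · exact le_rfl
    · exact Nat.zero_le _
  have hζr : ζ.1.rank < q R := by
    rw [hζ1]
    have := hlolt R
    split_ifs <;> omega
  have hloi' : lo q i' ≤ lo q R := hlomono hi'R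
  have hloR := hlolt R
  let b : ℕ → ℝ := fun j => if j < i' then bη j else if j < R then p.β * bζ j else b0
  have hbη : ∀ j, j < i' → b j = bη j := fun j h => if_pos h
  have hbζ : ∀ j, i' ≤ j → j < R → b j = p.β * bζ j := fun j h h' => by
    simp only [b]
    rw [if_neg (by omega), if_pos h']
  have hbR : b R = b0 := by
    simp only [b]
    rw [if_neg (by omega), if_neg (lt_irrefl R)]
  -- splitting of sums weighted by `b`
  have hsum : ∀ y : ℕ → ℝ, ∑ j ∈ Finset.Ico i (R + 1), b j * y j =
      ∑ j ∈ Finset.Ico i i', bη j * y j + p.β * ∑ j ∈ Finset.Ico i' R, bζ j * y j + b0 * y R := by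
    intro y
    rw [Finset.sum_Ico_succ_top (by omega), ← Finset.sum_Ico_consecutive _ hii' hi'R, hbR,
      Finset.mul_sum]
    congr 2
    · exact Finset.sum_congr rfl fun j hj => by rw [hbη j (Finset.mem_Ico.1 hj).2]
    · exact Finset.sum_congr rfl fun j hj => by
        rw [hbζ j (Finset.mem_Ico.1 hj).1 (Finset.mem_Ico.1 hj).2, mul_assoc]
  have hbclose : ∀ j, i ≤ j → j < R + 1 → |b j - a j| ≤ δ * (1 / 2) ^ q j := by
    intro j hj1 hj2
    rcases lt_or_ge j i' with h | h
    · rw [hbη j h]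
      exact hη2 j hj1 h
    · rcases Nat.lt_succ_iff_lt_or_eq.1 hj2 with h' | rfl
      · rw [hbζ j h h']
        have h1 := hζ2 j h h'
        have h2 : p.β * bζ j - a j = p.β * (bζ j - p.β⁻¹ * a j) := by
          rw [mul_sub, mul_inv_cancel_left₀ hβ.ne']
        rw [h2, abs_mul, abs_of_pos hβ]
        exact (mul_le_of_le_one_left (abs_nonneg _) (by linarith [p.β_le])).trans h1
      · rw [hbR]
        exact hb0'
  let t : BDTree := node (q R) η.1 ζ.1 (ξ R).1 (lo q i') (lo q R) b0 u
  have hα : ∀ m, p.α t m = spread q i (R + 1) b m := by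
    intro m
    have h1 := hsum fun j => if m = q j then 1 else 0
    have h2 : (if lo q i' < m then p.α ζ.1 m else 0) = spread q i' R bζ m := by
      rw [← hζ3]
      refine ite_eq_left_iff.2 fun h => ?_
      rw [hζ3]
      refine (Finset.sum_eq_zero fun j hj => if_neg ?_).symm
      have := hlomono (Finset.mem_Ico.1 hj).1
      have := hlolt j
      omega
    rw [α_node, h2, hη3]
    simpa [spread] using h1.symm
  have hφ : ∀ x, p.φ t x = p.β * ∑ j ∈ Finset.Ico i (R + 1),
      b j * (p.φ (ξ j).1 x - p.φ (ξ j).1 (E.S (lo q j) x)) := by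
    intro x
    have h0 : p.φ ζ.1 (E.S (lo q i') x) = 0 := by
      rw [hζ4, Finset.sum_eq_zero, mul_zero]
      intro j hj
      rw [E.S_S, min_eq_right (hlomono (Finset.mem_Ico.1 hj).1), sub_self, mul_zero]
    rw [φ_node, h0, hg, hη4, hζ4, hsum]
    simp only [zero_apply]
    ring
  have hdual : DualBound v (p.α t) (1 + 2 * δ * Ku) :=
    ha.of_close hU hKu hv hp.δ_nonneg fun m => by
      rw [hα]
      exact abs_spread_sub_le hq hp.δ_nonneg hbclose m
  have hdual2 : DualBound v (p.α t) 2 := hdual.le (by linarith [p.β_le])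
  have hnorm : ∀ x, |p.φ t x| ≤ 2 * ‖x‖ := by
    intro x
    have h1 := hdual2.subsequence hq (fun j => ‖E.S (q j) x - E.S (lo q j) x‖) (R + 1)
    have h2 := h1.trans (mul_le_mul_of_nonneg_left (hlow x (R + 1)) zero_le_two)
    have h3 : |∑ j ∈ Finset.Ico i (R + 1),
        b j * (p.φ (ξ j).1 x - p.φ (ξ j).1 (E.S (lo q j) x))| ≤ 2 * (2 * (C * ‖x‖)) := by
      refine (Finset.abs_sum_le_sum_abs _ _).trans ?_
      refine le_trans ?_ (mul_le_mul_of_nonneg_left h2 zero_le_two)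
      rw [Finset.mul_sum]
      refine (Finset.sum_le_sum (g := fun j => 2 * (|p.α t (q j)| *
        |‖E.S (q j) x - E.S (lo q j) x‖|)) fun j hj => ?_).trans
        (Finset.sum_le_sum_of_subset_of_nonneg ?_ fun j _ _ => by positivity)
      · rw [hα, spread_apply hq, if_pos (Finset.mem_Ico.1 hj), abs_mul,
          ← p.φ_S_of_rank_le (ξ j).2 (hξ j).le x, ← map_sub, abs_norm]
        have := (ξ j).2.abs_φ_le p (E.S (q j) x - E.S (lo q j) x)
        nlinarith [abs_nonneg (b j)]
      · intro j hj
        exact Finset.mem_range.2 (Finset.mem_Ico.1 hj).2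
    rw [hφ, abs_mul, abs_of_pos hβ]
    have := mul_le_mul_of_nonneg_left h3 hβ.le
    nlinarith [norm_nonneg x]
  have hlarge : p.Large v t := by
    rcases hii'.eq_or_lt with h | h
    · left
      change η.1.rank = 0
      rw [hη1, if_neg (by omega)]
    · right
      right
      intro hd
      obtain ⟨I, rfl⟩ : ∃ I, i' = I + 1 := ⟨i' - 1, by omega⟩
      have hr' : t.pre.rank = q I := by
        change η.1.rank = q I
        rw [hη1, if_pos h]
        rfl
      have hr : t.rank = q R := rfl
      rw [hr', hr] at hd
      refine hmin I (by omega) ⟨by omega, (hd.of_close hU hKu hv hp.δ_nonneg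
        (α' := spread q I R a) fun m => ?_).le ?_⟩
      · have : (if q I ≤ m ∧ m < q R then p.α t m else 0) = spread q I R b m := by
          rw [hα]
          by_cases hm : ∃ j, q j = m
          · obtain ⟨j, rfl⟩ := hm
            rw [spread_apply hq, spread_apply hq]
            simp only [hq.le_iff_le, hq.lt_iff_lt]
            split_ifs <;> first | rfl | omega
          · push Not at hm
            simp [spread_of_notMem _ _ _ hm]
        rw [this, abs_sub_comm]
        exact abs_spread_sub_le hq hp.δ_nonneg (fun j h1 h2 => hbclose j (by omega) (by omega)) m
      · have := hp.c_le
        have := hp.one_le_K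
        nlinarith [p.c_pos]
  have hadm : p.Adm v t := ⟨η.2, ζ.2, (ξ R).2,
    ⟨hηr, by omega, by omega, hloR, hζr, hξ R⟩, hb0, hu, hnorm, hdual2, hlarge⟩
  refine ⟨⟨t, hadm⟩, b, ?_, hbclose, hα, hφ, fun z hz0 hz => ?_⟩
  · rw [if_pos hir]
    rfl
  · have hw : (p.data v).ext z ζ (lo q i') = 0 := by
      have h1 := hζ5 (fun γ' => (p.data v).ext z γ' (lo q i'))
        (by rw [(p.data v).ext_of_le _ (by rw [(p.data v).rank_root]; omega), hz0])
        (fun γ' m hm => by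
          rw [(p.data v).ext_ext]
          rcases le_or_gt (q m) (lo q i') with h | h
          · rw [min_eq_left (by omega), hz γ' m hm, (p.data v).ext_of_le _ (by omega)]
          · rw [min_eq_right (by omega)])
      rw [h1, Finset.sum_eq_zero, mul_zero]
      intro j hj
      rw [(p.data v).ext_ext, min_eq_right (hlomono (Finset.mem_Ico.1 hj).1), sub_self, mul_zero]
    have h2 : (p.data v).ext z ⟨t, hadm⟩ (q R - 1) =
        (p.data v).ext z η (q R - 1) +
      p.β * ((p.data v).ext z ζ (q R - 1) - (p.data v).ext z ζ (min (lo q i') (q R - 1))) +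
      p.β * (b0 * ((p.data v).ext z (ξ R) (q R - 1) -
        (p.data v).ext z (ξ R) (min (lo q R) (q R - 1)))) :=
      (p.data v).ext_of_lt z (show q R - 1 < q R by omega)
    have hξR : (ξ R).1.rank ≤ q R - 1 := by have := hξ R; omega
    rw [hz ⟨t, hadm⟩ R rfl, min_eq_left (by omega), min_eq_left (by omega), hw,
      (p.data v).ext_of_le z (show η.1.rank ≤ q R - 1 by omega),
      (p.data v).ext_of_le z (show ζ.1.rank ≤ q R - 1 by omega),
      (p.data v).ext_of_le z (γ := ξ R) hξR, hη5 z hz0 hz, hζ5 z hz0 hz] at h2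
    rw [h2, hsum]
    ring

end BDParams

end LowerEstimate

section SkippedEstimate

variable {X V : Type*} [NormedAddCommGroup X] [NormedSpace ℝ X] [NormedAddCommGroup V]
  [NormedSpace ℝ V] {E : FDDOn X} {v : ℕ → V} {Ku : ℝ}

namespace BDParams

open BDTree FDDOn

variable {p : BDParams E} {K δ : ℝ}

theorem IsFine.skipped_lower_estimate (hp : p.IsFine K δ) (hU : UncondWith v Ku) (hKu : 1 ≤ Ku)
    (hv : ∀ i, ‖v i‖ = 1) (hδ : 2 * δ * Ku ≤ p.β / 2) (hδ' : 4 * δ * Ku ^ 2 ≤ 1)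
    {C : ℝ} (hC : 2 * p.β * C ≤ 1) {r q : ℕ → ℕ} (hrq : ∀ n, r n < q n)
    (hqr : ∀ n, q n < r (n + 1))
    (hlow : ∀ x N, ‖∑ j ∈ Finset.range N, ‖E.S (q j) x - E.S (lo q j) x‖ • v (q j)‖ ≤ C * ‖x‖)
    (z : ℕ → (p.data v).Z)
    (hz : ∀ n, ∀ i ∈ (p.data v).fdd.suppIn (z n), r n < i ∧ i < q n) (hz1 : ∀ n, ‖z n‖ = 1)
    (co : ℕ → ℝ) (N : ℕ) :
    ‖∑ n ∈ Finset.range N, co n • v (q n)‖ ≤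
      6 * Ku ^ 2 / p.β * ‖∑ n ∈ Finset.range N, co n • z n‖ := by
  let D := p.data v
  have hβ := p.β_pos
  have hq : StrictMono q := strictMono_nat_of_lt_succ fun n => (hqr n).trans (hrq _)
  have hr : StrictMono r := strictMono_nat_of_lt_succ fun n => (hrq n).trans (hqr _)
  have hqr' : ∀ {m n}, m < n → q m ≤ r n := fun {m n} h =>
    (hqr m).le.trans (hr.monotone h)
  have hlor : ∀ n, lo q n ≤ r n := fun n => by
    rcases n with _ | n
    · exact Nat.zero_le _
    · exact (hqr n).le
  have hself : ∀ n m, q n ≤ m + 1 → D.projZ m (z n) = z n := fun n m hm => by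
    rw [← D.fdd_S_succ]
    exact D.fdd.S_eq_self_of_supp fun i hi => (hz n i hi).2.trans_le hm
  have hzero : ∀ n, D.projZ (r n) (z n) = 0 := fun n => by
    rw [← D.fdd_S_succ]
    exact D.fdd.S_eq_zero_of_supp fun i hi => (hz n i hi).1
  have hex : ∀ n, ∃ ξ, D.rank ξ < q n ∧ 1 / 3 < |D.incl (z n) ξ| := by
    intro n
    by_contra hcon
    push Not at hcon
    have hqn : q n - 1 + 1 = q n := by have := hrq n; omega
    have := D.norm_le_of_projZ_eq (hself n (q n - 1) hqn.ge) (1 / 3)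
      fun ξ hξ => hcon ξ (by omega)
    rw [hz1] at this
    norm_num at this
  choose ξ hξ hξ' using hex
  set y := ∑ n ∈ Finset.range N, co n • z n with hy
  have hincl : ∀ γ, D.incl y γ = ∑ n ∈ Finset.range N, co n * D.incl (z n) γ := by
    intro γ
    simp [hy]
  have hext : ∀ γ m, D.ext (D.incl y) γ m =
      ∑ n ∈ Finset.range N, co n * D.ext (D.incl (z n)) γ m := by
    intro γ m
    rw [← D.incl_projZ_apply, hy]
    simp [D.incl_projZ_apply]
  have hroot : D.incl y D.root = 0 := by
    rw [hincl]
    refine Finset.sum_eq_zero fun n _ => ?_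
    rw [D.incl_eq_zero (hzero n) (by rw [D.rank_root]; exact Nat.zero_le _), mul_zero]
  have hnode : ∀ γ m, D.rank γ = q m → D.ext (D.incl y) γ (q m - 1) = D.incl y γ := by
    intro γ m hm
    rw [hext, hincl]
    refine Finset.sum_congr rfl fun n _ => ?_
    congr 1
    rcases le_or_gt n m with h | h
    · have := hq.monotone h
      exact D.ext_eq_self (hself n (q m - 1) (by omega)) γ le_rfl
    · have := hqr' h
      rw [D.ext_eq_zero (hzero n) γ (by omega), D.incl_eq_zero (hzero n) (by omega)]
  set c : ℕ → ℝ := fun j => co j * D.incl (z j) (ξ j) with hc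
  have hdiff : ∀ j, j < N → D.incl y (ξ j) - D.ext (D.incl y) (ξ j) (lo q j) = c j := by
    intro j hj
    rw [hext, hincl, ← Finset.sum_sub_distrib,
      Finset.sum_eq_single_of_mem j (Finset.mem_range.2 hj)]
    · rw [D.ext_eq_zero (hzero j) _ (hlor j), mul_zero, sub_zero]
    · intro n _ hn
      rcases lt_or_gt_of_ne hn with h | h
      · rw [D.ext_eq_self (hself n (lo q j) ((q_le_lo hq h).trans (Nat.le_succ _))) _ le_rfl,
          sub_self]
      · have h1 := hqr' h
        have h2 := hξ j
        rw [D.ext_eq_zero (hzero n) _ ((lo_le hq j).trans h1), D.incl_eq_zero (hzero n) (by omega)]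
        simp
  set W := ‖∑ j ∈ Finset.range N, c j • v (q j)‖ with hW
  have hW0 : 0 ≤ W := norm_nonneg _
  have hw : ‖∑ n ∈ Finset.range N, co n • v (q n)‖ ≤ 3 * Ku * W := by
    have hne : ∀ j, D.incl (z j) (ξ j) ≠ 0 := fun j h => by
      have := hξ' j
      rw [h, abs_zero] at this
      norm_num at this
    have := (hU.subsequence hq) (fun j => 3 * c j) (fun j => (3 * D.incl (z j) (ξ j))⁻¹) N
      fun j => by
        rw [abs_inv, abs_mul]
        refine inv_le_one_of_one_le₀ ?_
        have := hξ' j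
        rw [abs_of_pos (by norm_num : (0 : ℝ) < 3)]
        linarith
    have h1 : ∀ j, (3 * D.incl (z j) (ξ j))⁻¹ * (3 * c j) = co j := fun j => by
      simp only [hc]
      have := hne j
      field_simp
    simp only [h1] at this
    refine this.trans_eq ?_
    simp only [mul_smul]
    rw [← Finset.smul_sum, norm_smul]
    simp only [Real.norm_eq_abs, abs_of_pos (by norm_num : (0 : ℝ) < 3)]
    ring
  obtain ⟨α, hα, hαW⟩ : ∃ α, DualBound v α 1 ∧
      Ku * ∑ j ∈ Finset.range N, α (q j) * c j = W := by
    obtain ⟨α, hα, h⟩ := exists_dualBound_norming hU hKu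
      (fun m => if m ∈ (Finset.range N).image q then c (Function.invFun q m) else 0) (q N)
    refine ⟨α, hα, ?_⟩
    rw [← sum_smul_subsequence hq] at h
    rw [hW, ← h, sum_subsequence hq N (fun j m => α m * c j)]
    congr 1
    refine Finset.sum_congr rfl fun m _ => ?_
    split_ifs <;> simp
  obtain ⟨γ, b, -, hb, -, -, hγ⟩ := hp.exists_lower hU (zero_le_one.trans hKu) hv hδ hC hq
    ((Nat.zero_le _).trans_lt (hrq 0)) hlow ξ hξ N 0 (Nat.zero_le N) (fun j => α (q j))
    (hα.mono fun m => by
      by_cases hm : ∃ j, q j = m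
      · obtain ⟨j, rfl⟩ := hm
        rw [spread_apply hq]
        split_ifs
        · exact le_rfl
        · simp
      · push Not at hm
        simp [spread_of_notMem _ _ _ hm])
  have hval := hγ (D.incl y) hroot hnode
  rw [Nat.Ico_zero_eq_range] at hval
  have hval' : D.incl y γ = p.β * ∑ j ∈ Finset.range N, b j * c j := by
    rw [hval]
    congr 1
    exact Finset.sum_congr rfl fun j hj => by rw [hdiff j (Finset.mem_range.1 hj)]
  have herr : |∑ j ∈ Finset.range N, α (q j) * c j - ∑ j ∈ Finset.range N, b j * c j| ≤
      2 * δ * Ku * W := by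
    rw [← Finset.sum_sub_distrib]
    have h1 := dualBound_of_abs_le_geometric (hU.subsequence hq) (zero_le_one.trans hKu)
      (fun i => hv (q i)) (e := fun j => if j < N then b j - α (q j) else 0) hp.δ_nonneg
      (fun j => by
        have := hp.δ_nonneg
        split_ifs with h
        · refine (hb j (Nat.zero_le j) h).trans (mul_le_mul_of_nonneg_left ?_ this)
          exact pow_le_pow_of_le_one (by norm_num) (by norm_num) hq.le_apply
        · rw [abs_zero]
          positivity) c N
    refine (Finset.abs_sum_le_sum_abs _ _).trans (le_trans (le_of_eq ?_) h1)
    refine Finset.sum_congr rfl fun j hj => ?_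
    simp only [if_pos (Finset.mem_range.1 hj)]
    rw [← abs_mul, abs_sub_comm, sub_mul]
  have hnorm : |D.incl y γ| ≤ ‖y‖ := by
    rw [← D.norm_incl]
    exact (D.incl y).norm_coe_le_norm γ
  rw [hval', abs_mul, abs_of_pos hβ] at hnorm
  set s := ∑ j ∈ Finset.range N, α (q j) * c j
  set s' := ∑ j ∈ Finset.range N, b j * c j
  have h1 : s - 2 * δ * Ku * W ≤ |s'| := by
    have := (abs_le.1 herr).2
    linarith [le_abs_self s']
  have h2 : p.β * (s - 2 * δ * Ku * W) ≤ ‖y‖ :=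
    (mul_le_mul_of_nonneg_left h1 hβ.le).trans hnorm
  have h3 : p.β * W ≤ 2 * Ku * ‖y‖ := by
    have h4 : W / 2 ≤ Ku * (s - 2 * δ * Ku * W) := by
      have : Ku * (s - 2 * δ * Ku * W) = W - 2 * δ * Ku ^ 2 * W := by rw [← hαW]; ring
      rw [this]
      nlinarith
    have h5 := mul_le_mul_of_nonneg_left h4 hβ.le
    have h6 := mul_le_mul_of_nonneg_left h2 (zero_le_one.trans hKu)
    linarith
  refine hw.trans ?_
  rw [div_mul_eq_mul_div, le_div_iff₀ hβ]
  have := mul_le_mul_of_nonneg_left h3 (by linarith : 0 ≤ 3 * Ku)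
  linarith

end BDParams

end SkippedEstimate

section WellFounded

variable {X V : Type*} [NormedAddCommGroup X] [NormedSpace ℝ X] [NormedAddCommGroup V]
  [NormedSpace ℝ V] {E : FDDOn X} {v : ℕ → V} {Ku K : ℝ}

theorem FDDOn.Shrinking.not_frequently_large (hE : E.Shrinking)
    (hK : 1 ≤ K) (hS : ∀ N x, ‖E.S N x‖ ≤ K * ‖x‖) (f : X →L[ℝ] ℝ) {n : ℕ → ℕ} (hn : Monotone n)
    {c : ℝ} (hc : 0 < c) :
    ¬ ∃ᶠ i in atTop, ∃ x, c * ‖x‖ < |f (E.S (n (i + 1)) x - E.S (n i) x)| := by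
  intro hfreq
  obtain ⟨ψ, hψ, h⟩ := extraction_of_frequently_atTop hfreq
  choose x hx using h
  let y : ℕ → X := fun k => E.S (n (ψ k + 1)) (x k) - E.S (n (ψ k)) (x k)
  have hy0 : ∀ k, y k ≠ 0 := fun k h0 => by
    have h1 : c * ‖x k‖ < |f (y k)| := hx k
    rw [h0, map_zero, abs_zero] at h1
    exact absurd h1 (not_lt.2 (by positivity))
  have hyn : ∀ k, ‖y k‖ ≤ 2 * K * ‖x k‖ := fun k =>
    (norm_sub_le _ _).trans (by linarith [hS (n (ψ k + 1)) (x k), hS (n (ψ k)) (x k)])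
  let z : ℕ → X := fun k => ‖y k‖⁻¹ • y k
  have hz1 : ∀ k, ‖z k‖ = 1 := fun k => by
    simp only [z]
    rw [norm_smul, norm_inv, norm_norm, inv_mul_cancel₀ (norm_ne_zero_iff.2 (hy0 k))]
  have hz0 : ∀ k, z k ≠ 0 := fun k h0 => by
    have := hz1 k
    rw [h0, norm_zero] at this
    exact zero_ne_one this
  have hzz : ∀ k, E.S (n (ψ k + 1)) (z k) - E.S (n (ψ k)) (z k) = z k := fun k => by
    simp only [z, map_smul, ← smul_sub]
    rw [FDDOn.block_block (E := E) (hn (Nat.le_succ _))]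
  have hsupp := fun k => FDDOn.exists_suppExact (E := E) (hn (Nat.le_succ (ψ k))) (hzz k) (hz0 k)
  choose a b hab ha hb using hsupp
  have hlim := hE z a b ⟨hab, fun k => (hb k).trans_le
    ((hn (Nat.succ_le_of_lt (hψ (Nat.lt_succ_self k)))).trans (ha (k + 1)))⟩ hz1 f
  have hlarge : ∀ k, c / (2 * K) ≤ |f (z k)| := fun k => by
    have h1 : c * ‖x k‖ < |f (y k)| := hx k
    have h2 : |f (z k)| = ‖y k‖⁻¹ * |f (y k)| := by
      simp [z, abs_mul]
    have h3 : 0 < ‖y k‖ := norm_pos_iff.2 (hy0 k)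
    rw [h2, div_le_iff₀ (by linarith), mul_assoc, le_inv_mul_iff₀ h3]
    have := mul_le_mul_of_nonneg_left (hyn k) hc.le
    nlinarith
  have hlim' := hlim.abs
  rw [abs_zero] at hlim'
  exact absurd (ge_of_tendsto' hlim' hlarge) (not_le.2 (div_pos hc (by linarith)))

theorem ShrinkingBasis.not_frequently_large (hV : ShrinkingBasis v) (hU : UncondWith v Ku)
    (hKu : 1 ≤ Ku) (f : V →L[ℝ] ℝ) {n : ℕ → ℕ} (hn : StrictMono n) {c : ℝ} (hc : 0 < c) :
    ¬ ∃ᶠ i in atTop,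
      ¬ DualBound v (fun m => if n i ≤ m ∧ m < n (i + 1) then f (v m) else 0) c := by
  intro hfreq
  obtain ⟨ψ, hψ, h⟩ := extraction_of_frequently_atTop hfreq
  have hex : ∀ k, ∃ z : V, ‖z‖ ≤ 1 ∧ c / Ku ≤ f z ∧
      ∃ co : ℕ → ℝ, z = ∑ i ∈ Finset.Icc (n (ψ k)) (n (ψ k + 1) - 1), co i • v i := by
    intro k
    obtain ⟨co, N, hN⟩ : ∃ (co : ℕ → ℝ) (N : ℕ), c * ‖∑ i ∈ Finset.range N, co i • v i‖ <
        ∑ i ∈ Finset.range N,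
          |if n (ψ k) ≤ i ∧ i < n (ψ k + 1) then f (v i) else 0| * |co i| := by
      have := h k
      unfold DualBound at this
      push Not at this
      exact this
    set w := ‖∑ i ∈ Finset.range N, co i • v i‖ with hw
    have hnk : n (ψ k) < n (ψ k + 1) := hn (Nat.lt_succ_self _)
    set I := Finset.Icc (n (ψ k)) (n (ψ k + 1) - 1) with hI
    have hmem : ∀ i, i ∈ I ↔ n (ψ k) ≤ i ∧ i < n (ψ k + 1) := fun i => by
      rw [hI, Finset.mem_Icc]
      omega
    let ε : ℕ → ℝ := fun i => SignType.sign (f (v i) * co i)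
    have hε : ∀ i, |ε i| ≤ 1 := fun i => by
      simp only [ε]
      rcases lt_trichotomy (f (v i) * co i) 0 with h | h | h <;> simp [h]
    have hεf : ∀ i, f ((ε i * co i) • v i) = |f (v i)| * |co i| := fun i => by
      rw [map_smul, smul_eq_mul, ← abs_mul, ← sign_mul_self (f (v i) * co i)]
      ring
    let u : V := ∑ i ∈ Finset.range N, ((if i ∈ I then ε i else 0) * co i) • v i
    have hu1 : ‖u‖ ≤ Ku * w := hU co _ N fun i => by
      split_ifs
      · exact hε i
      · simp
    have hu2 : c * w < f u := by
      refine hN.trans_eq ?_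
      rw [map_sum]
      refine Finset.sum_congr rfl fun i _ => ?_
      by_cases hi : i ∈ I
      · rw [if_pos ((hmem i).1 hi), if_pos hi, hεf]
      · rw [if_neg (mt (hmem i).2 hi), if_neg hi]
        simp
    have hu3 : u = ∑ i ∈ I, (if i < N then ε i * co i else 0) • v i := by
      have h1 : u = ∑ i ∈ Finset.range N, if i ∈ I then (ε i * co i) • v i else 0 :=
        Finset.sum_congr rfl fun i _ => by split_ifs <;> simp
      rw [h1, Finset.sum_ite_mem, Finset.inter_comm, ← Finset.sum_ite_mem]
      exact Finset.sum_congr rfl fun i _ => by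
        simp only [Finset.mem_range]
        split_ifs <;> simp
    have hw0 : 0 ≤ w := norm_nonneg _
    have hu0 : u ≠ 0 := fun h0 => by
      rw [h0, map_zero] at hu2
      exact absurd hu2 (not_lt.2 (by positivity))
    have hu0' : 0 < ‖u‖ := norm_pos_iff.2 hu0
    refine ⟨‖u‖⁻¹ • u, ?_, ?_,
      fun i => ‖u‖⁻¹ * (if i < N then ε i * co i else 0), ?_⟩
    · rw [norm_smul, norm_inv, norm_norm, inv_mul_cancel₀ hu0'.ne']
    · rw [map_smul, smul_eq_mul, le_inv_mul_iff₀ hu0', mul_div_assoc', div_le_iff₀ (by linarith)]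
      nlinarith [mul_le_mul_of_nonneg_left hu1 hc.le]
    · simp only [mul_smul, ← Finset.smul_sum]
      rw [← hu3]
  choose z hz1 hz2 hz3 using hex
  have hlim := hV.2 z _ _ ⟨hz3, fun k => by
    have h1 := hn (Nat.lt_succ_self (ψ k))
    have h2 := hn.monotone (Nat.succ_le_of_lt (hψ (Nat.lt_succ_self k)))
    simp only [Nat.succ_eq_add_one] at h1 h2
    omega⟩ hz1 f
  exact absurd (ge_of_tendsto' hlim hz2) (not_le.2 (div_pos hc (by linarith)))

namespace BDParams

open BDTree

variable (p : BDParams E)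

theorem wellFounded_succ (hE : E.Shrinking) (hK : 1 ≤ K) (hS : ∀ N x, ‖E.S N x‖ ≤ K * ‖x‖)
    (hV : ShrinkingBasis v) (hU : UncondWith v Ku) (hKu : 1 ≤ Ku) :
    WellFounded fun y x => (p.data v).Succ x y := by
  rw [wellFounded_iff_isEmpty_descending_chain]
  refine ⟨fun ⟨γ, hγ⟩ => ?_⟩
  let t : ℕ → BDTree := fun i => (γ i).1
  have ht : ∀ i, p.Adm v (t i) := fun i => (γ i).2
  have hpre : ∀ i, (t (i + 1)).pre = t i := fun i => congrArg Subtype.val (hγ i).2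
  let n : ℕ → ℕ := fun i => (t i).rank
  have hn : StrictMono n := strictMono_nat_of_lt_succ fun i => by
    have h1 := (p.data v).rank_pre (γ (i + 1)) (hγ i).1
    rw [(hγ i).2] at h1
    exact h1
  have hφ : ∀ i j, i ≤ j → ∀ m ≤ n i, ∀ x, p.φ (t j) (E.S m x) = p.φ (t i) (E.S m x) := by
    intro i j hij m hm x
    induction j, hij using Nat.le_induction with
    | base => rfl
    | succ j hij ih =>
      rw [p.φ_S_pre (ht (j + 1)) (by rw [hpre]; exact hm.trans (hn.monotone hij)), hpre, ih]
  have hα : ∀ i j, i ≤ j → ∀ m ≤ n i, p.α (t j) m = p.α (t i) m := by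
    intro i j hij m hm
    induction j, hij using Nat.le_induction with
    | base => rfl
    | succ j hij ih =>
      rw [p.α_pre (ht (j + 1)) (by rw [hpre]; exact hm.trans (hn.monotone hij)), hpre, ih]
  obtain ⟨f, -, hf⟩ := exists_ultrafilter_limit (fun i => p.φ (t i)) 2
    (fun i x => (ht i).abs_φ_le p x) (hyperfilter ℕ)
  have hfS : ∀ i, ∀ m ≤ n i, ∀ x, f (E.S m x) = p.φ (t i) (E.S m x) := by
    intro i m hm x
    refine tendsto_nhds_unique (hf (E.S m x)) (tendsto_const_nhds.congr' ?_)
    refine Filter.Eventually.filter_mono Nat.hyperfilter_le_atTop ?_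
    filter_upwards [eventually_ge_atTop i] with j hj
    rw [hφ i j hj m hm]
  let a : ℕ → ℝ := fun m => p.α (t m) m
  have ha : ∀ i, ∀ m ≤ n i, p.α (t i) m = a m := by
    intro i m hm
    rcases le_total i m with h | h
    · exact (hα i m h m hm).symm
    · exact hα m i h m hn.le_apply
  have hadual : DualBound v a 2 := by
    intro co N
    refine le_trans (le_of_eq (Finset.sum_congr rfl fun m hm => ?_)) ((ht N).dualBound p co N)
    rw [ha N m ((Finset.mem_range.1 hm).le.trans hn.le_apply)]
  obtain ⟨g, hg⟩ := hadual.exists_functional hV.1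
  have h1 := hE.not_frequently_large hK hS f (n := fun i => n i - 1)
    (fun i j hij => Nat.sub_le_sub_right (hn.monotone hij) 1) p.c_pos
  have h2 := hV.not_frequently_large hU hKu g hn p.c_pos
  rw [not_frequently] at h1 h2
  obtain ⟨i, hi1, hi2, hi3⟩ := (h1.and (h2.and (eventually_ge_atTop 1))).exists
  rcases (ht (i + 1)).large p with h | ⟨x, hx⟩ | h
  · rw [hpre] at h
    have : i ≤ n i := hn.le_apply
    have : n i = 0 := h
    omega
  · rw [hpre] at hx
    refine hi1 ⟨x, hx.trans_eq ?_⟩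
    have hle : n i - 1 ≤ n (i + 1) := (Nat.sub_le _ _).trans (hn (Nat.lt_succ_self i)).le
    rw [map_sub f, hfS (i + 1) _ (Nat.sub_le _ _), hfS (i + 1) _ hle, ← map_sub]
  · rw [hpre] at h
    refine hi2 fun hd => h (hd.mono fun m => le_of_eq ?_)
    change |if n i ≤ m ∧ m < n (i + 1) then _ else _| = _
    split_ifs with hm
    · rw [hg, ha (i + 1) m hm.2.le]
    · rfl

end BDParams

end WellFounded

section Nets

variable {X : Type*} [NormedAddCommGroup X] [NormedSpace ℝ X]

/-- A finite net of the unit ball of functionals that depend only on the `n`-th coordinate. -/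
theorem FDDOn.exists_net (E : FDDOn X) (n : ℕ) {ε : ℝ} (hε : 0 < ε) :
    ∃ (s : ℕ) (g : ℕ → X →L[ℝ] ℝ), (∀ u x, g u (E.P n x) = g u x) ∧ (∃ u < s, g u = 0) ∧
      ∀ f : X →L[ℝ] ℝ, (∀ x, |f x| ≤ ‖x‖) → (∀ x, f (E.P n x) = f x) →
        ∃ u < s, ∀ x, |g u x - f x| ≤ ε * ‖x‖ := by
  let R := LinearMap.range (E.P n : X →ₗ[ℝ] X)
  have : FiniteDimensional ℝ R := E.finDim n
  have : ProperSpace (R →L[ℝ] ℝ) := FiniteDimensional.proper ℝ (R →L[ℝ] ℝ)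
  let Q : X →L[ℝ] R := (E.P n).codRestrict R fun x => ⟨x, rfl⟩
  have hQ : ∀ x, (Q x : X) = E.P n x := fun x => rfl
  have hQP : ∀ x, Q (E.P n x) = Q x := fun x => Subtype.ext (by rw [hQ, hQ, E.idem])
  have hcont : Continuous fun h : R →L[ℝ] ℝ => h.comp Q := by fun_prop
  have hcomp : IsCompact ((fun h : R →L[ℝ] ℝ => h.comp Q) '' Metric.closedBall 0 1) :=
    (isCompact_closedBall (0 : R →L[ℝ] ℝ) 1).image hcont
  obtain ⟨t, ht, htfin, hcov⟩ := hcomp.finite_cover_balls hε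
  obtain ⟨s, e, he⟩ : ∃ (s : ℕ) (e : ℕ → X →L[ℝ] ℝ), ∀ f, f ∈ t ↔ ∃ u < s, e u = f := by
    classical
    let l := htfin.toFinset.toList
    refine ⟨l.length, fun u => l.getD u 0, fun f => ?_⟩
    rw [← htfin.mem_toFinset, ← Finset.mem_toList, List.mem_iff_getElem]
    refine ⟨fun ⟨u, hu, h⟩ => ⟨u, hu, ?_⟩, fun ⟨u, hu, h⟩ => ⟨u, hu, ?_⟩⟩
    · exact (List.getD_eq_getElem _ _ hu).trans h
    · exact (List.getD_eq_getElem _ _ hu).symm.trans h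
  refine ⟨s + 1, fun u => if u < s then e u else 0, fun u x => ?_, ⟨s, by simp⟩, ?_⟩
  · by_cases hu : u < s
    · obtain ⟨h, -, hh⟩ := ht ((he _).2 ⟨u, hu, rfl⟩)
      simp only [if_pos hu, ← hh, ContinuousLinearMap.comp_apply, hQP]
    · simp [hu]
  · intro f hf1 hfP
    have hmem : f ∈ (fun h : R →L[ℝ] ℝ => h.comp Q) '' Metric.closedBall 0 1 := by
      refine ⟨f.comp R.subtypeL, ?_, ?_⟩
      · refine (mem_closedBall_zero_iff (E := R →L[ℝ] ℝ)).2 ?_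
        exact ContinuousLinearMap.opNorm_le_bound _ zero_le_one fun x => by
          simpa using hf1 x
      · ext x
        exact hfP x
    obtain ⟨g, hg, hgf⟩ := Set.mem_iUnion₂.1 (hcov hmem)
    obtain ⟨u, hu, rfl⟩ := (he g).1 hg
    refine ⟨u, hu.trans (Nat.lt_succ_self s), fun x => ?_⟩
    simp only [if_pos hu]
    rw [← Real.norm_eq_abs, ← sub_apply]
    refine (ContinuousLinearMap.le_opNorm _ _).trans ?_
    gcongr
    rw [← dist_eq_norm, dist_comm]
    exact (Metric.mem_ball.1 hgf).le

/-- A finite net of the interval `[-1, 1]` that contains `0`. -/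
theorem exists_finset_net_Icc {ε : ℝ} (hε : 0 < ε) :
    ∃ A : Finset ℝ, (∀ a ∈ A, |a| ≤ 1) ∧ 0 ∈ A ∧ ∀ t : ℝ, |t| ≤ 1 → ∃ a ∈ A, |a - t| ≤ ε := by
  obtain ⟨t, ht, htfin, hcov⟩ := (isCompact_Icc (a := (-1 : ℝ)) (b := 1)).finite_cover_balls hε
  refine ⟨insert 0 htfin.toFinset, fun a ha => ?_, Finset.mem_insert_self _ _, fun s hs => ?_⟩
  · rcases Finset.mem_insert.1 ha with rfl | ha
    · simp
    · exact abs_le.2 (ht (htfin.mem_toFinset.1 ha))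
  · obtain ⟨a, ha, has⟩ := Set.mem_iUnion₂.1 (hcov (abs_le.1 hs))
    refine ⟨a, Finset.mem_insert_of_mem (htfin.mem_toFinset.2 ha), ?_⟩
    rw [abs_sub_comm]
    exact (Metric.mem_ball.1 has).le

theorem BDParams.exists_isFine (E : FDDOn X) {K β c δ : ℝ} (hK : 1 ≤ K)
    (hS : ∀ N x, ‖E.S N x‖ ≤ K * ‖x‖) (hβ : 0 < β) (hβ' : β ≤ 1 / 8) (hc : 0 < c)
    (hcK : c * (2 * K) ≤ β / 2) (hδ : 0 < δ) (hδ1 : δ ≤ 1) (hδK : δ * (4 * K ^ 2) ≤ β / 2) :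
    ∃ p : BDParams E, p.β = β ∧ p.IsFine K δ := by
  choose s g hgP hg0 hg using fun n : ℕ =>
    E.exists_net (n - 1) (ε := δ * (1 / 2) ^ n) (by positivity)
  choose A hA hA0 hAnet using fun n : ℕ =>
    exists_finset_net_Icc (ε := δ * (1 / 2) ^ n) (by positivity)
  let p : BDParams E :=
    { β := β, β_pos := hβ, β_le := hβ', c := c, c_pos := hc, g := g
      g_P := fun n => hgP (n + 1), s := s, A := A, A_le := hA }
  exact ⟨p, rfl,
    { one_le_K := hK, norm_S_le := hS, δ_nonneg := hδ.le, δ_le_one := hδ1, δ_le := hδK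
      c_le := hcK, net := fun n => hg (n + 1), exists_zero := fun n => hg0 (n + 1)
      zero_mem := hA0, A_net := hAnet }⟩

end Nets

/-- **Theorem 6.5.**  Let `V` have a normalized unconditional basis `(v_i)` such that,
for a fixed constant `C`, `(v_{p_n})` `C`-dominates `(v_{q_n})` whenever
`p_1 < q_1 < p_2 < q_2 < ⋯`.  If `X` has an FDD satisfying subsequential `V`-lower
estimates, then `X` embeds into an `ℒ_∞` space `Z` with an FDD `(F̄_i)` satisfying
skipped subsequential `V'`-lower estimates for some subsequence `V'` of `(v_i)`;
moreover if the FDD of `X` and `(v_i)` are shrinking, then `(F̄_i)` can be chosen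
shrinking. -/
theorem statement_17 (V : Type*) [NormedAddCommGroup V] [NormedSpace ℝ V] [CompleteSpace V]
    (v : ℕ → V) (hnorm : ∀ i, ‖v i‖ = 1) (huncond : UnconditionalBasis v)
    (Cd : ℝ) (hCd : 0 < Cd)
    (hdom : ∀ p q : ℕ → ℕ, (∀ n, p n < q n) → (∀ n, q n < p (n + 1)) →
      ∀ (co : ℕ → ℝ) (N : ℕ),
        ‖∑ n ∈ Finset.range N, co n • v (q n)‖ ≤ Cd * ‖∑ n ∈ Finset.range N, co n • v (p n)‖)
    (X : Type*) [NormedAddCommGroup X] [NormedSpace ℝ X] [CompleteSpace X]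
    (E : FDDOn X) (Clow : ℝ) (hClow : 1 ≤ Clow) (hlow : SubseqLowerEst E v Clow) :
    ∃ (Z : Type) (_ : NormedAddCommGroup Z) (_ : NormedSpace ℝ Z) (_ : CompleteSpace Z)
      (F : FDDOn Z),
      IsLinfty Z ∧ Embeds X Z ∧
      (∃ (K : ℝ) (m : ℕ → ℕ), 1 ≤ K ∧ StrictMono m ∧
        ∀ p q : ℕ → ℕ, (∀ n, p n < q n) → (∀ n, q n < p (n + 1)) →
          ∀ (z : ℕ → Z),
            (∀ n, (F.suppIn (z n)).Finite ∧
              ∀ i ∈ F.suppIn (z n), m (p n) < i ∧ i < m (q n)) →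
            (∀ n, ‖z n‖ = 1) →
            ∀ (co : ℕ → ℝ) (N : ℕ),
              ‖∑ n ∈ Finset.range N, co n • v (q n)‖ ≤
                K * ‖∑ n ∈ Finset.range N, co n • z n‖) ∧
      (E.Shrinking → ShrinkingBasis v → F.Shrinking) := by
  obtain ⟨-, Ku, hKu, hU⟩ := huncond
  obtain ⟨K, hK, hS⟩ := E.exists_norm_S_le
  obtain ⟨C, hC0, hC⟩ := exists_lower_estimate hnorm (by linarith) hU hCd hdom E
    (by linarith) hlow hK hS
  let β : ℝ := 1 / (8 * (C + 1))
  have hβ : 0 < β := by positivity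
  have hβ8 : β ≤ 1 / 8 := one_div_le_one_div_of_le (by norm_num) (by linarith)
  have hβC : 2 * β * C ≤ 1 := by
    have : β * (8 * (C + 1)) = 1 := one_div_mul_cancel (by positivity)
    nlinarith
  let δ : ℝ := β / (8 * K ^ 2 * Ku ^ 2)
  have hδ : 0 < δ := by positivity
  have hδe : δ * (8 * K ^ 2 * Ku ^ 2) = β := div_mul_cancel₀ _ (by positivity)
  have hK2 : 1 ≤ K ^ 2 := one_le_pow₀ hK
  have hKu2 : 1 ≤ Ku ^ 2 := one_le_pow₀ hKu
  have hKuKu : Ku ≤ Ku ^ 2 := le_self_pow₀ hKu two_ne_zero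
  have hδK : δ * (4 * K ^ 2) ≤ β / 2 := by
    have : δ * (4 * K ^ 2) * 1 ≤ δ * (4 * K ^ 2) * Ku ^ 2 := by gcongr
    linarith
  have hδKu2 : 4 * δ * Ku ^ 2 ≤ β / 2 := by
    have : 4 * δ * Ku ^ 2 * 1 ≤ 4 * δ * Ku ^ 2 * K ^ 2 := by gcongr
    linarith
  have hδKu : 2 * δ * Ku ≤ β / 2 := by
    have : 2 * δ * Ku ≤ 2 * δ * Ku ^ 2 := by gcongr
    have : 0 ≤ δ * Ku ^ 2 := by positivity
    linarith
  have hδ1 : δ ≤ 1 := by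
    have : δ * 1 ≤ δ * Ku ^ 2 := by gcongr
    linarith
  clear_value δ β
  obtain ⟨p, rfl, hp⟩ : ∃ p : BDParams E, p.β = β ∧ p.IsFine K δ :=
    BDParams.exists_isFine E (c := β / (4 * K)) hK hS hβ hβ8 (by positivity)
      (le_of_eq (by field_simp; norm_num)) hδ hδ1 hδK
  obtain ⟨T, hT⟩ := p.exists_embedding v
  refine ⟨(p.data v).Z, inferInstance, inferInstance, inferInstance, (p.data v).fdd,
    (p.data v).isLinfty, ⟨T, 1 / (8 * K), by positivity, fun x => ?_⟩,
    ⟨6 * Ku ^ 2 / p.β, id, ?_, strictMono_id, fun r q hrq hqr z hz hz1 co N => ?_⟩,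
    fun hE hV => (p.data v).fdd_shrinking (p.wellFounded_succ hE hK hS hV hU hKu)⟩
  · obtain ⟨t, ht, hx⟩ := hp.exists_large_value v x
    let γ : p.Index v := ⟨t, ht⟩
    have h1 : |p.φ t x| ≤ ‖T x‖ := by
      rw [← (p.data v).norm_incl, ← hT x γ, ← Real.norm_eq_abs]
      exact ((p.data v).incl (T x)).norm_coe_le_norm γ
    rw [one_div_mul_eq_div, div_le_iff₀ (by positivity)]
    nlinarith
  · rw [le_div_iff₀ hβ]
    linarith
  · exact hp.skipped_lower_estimate hU hKu hnorm hδKu (by linarith) hβC hrq hqr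
      (hC q (strictMono_nat_of_lt_succ fun n => (hqr n).trans (hrq (n + 1)))) z
      (fun n => (hz n).2) hz1 co N
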